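/- arXiv:2411.04683 — 2 statements merged into one kernel-verified Lean document; each statement's English description precedes it below -/
import Mathlib

section
/- Let Ω ⊂ ℂ be a bounded, open, simply connected set whose frontier Γ = ∂Ω equals the image of an injective, twice continuously differentiable map γ : S¹ → ℂ, and let ξ, η : closure(Ω) → ℝ be continuous on closure(Ω), harmonic on Ω, with ξ(γ(e^{iθ})) = cos θ and η(γ(e^{iθ})) = sin θ for all θ. Then at every point p ∈ Ω the gradients ∇ξ(p) and ∇η(p) are linearly independent vectors in ℝ²; equivalently, for every (α, β) ∈ ℝ² with (α, β) ≠ (0, 0) and every p ∈ Ω, α∇ξ(p) + β∇η(p) ≠ 0. -/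
open Complex Metric Set

/-- A real-valued function on `ℂ ≅ ℝ²` is harmonic on an open set `U` if it is twice
continuously differentiable on `U` and its Laplacian vanishes identically on `U`. -/
def HarmonicOnSet (f : ℂ → ℝ) (U : Set ℂ) : Prop :=
  ContDiffOn ℝ 2 f U ∧
    ∀ p ∈ U,
      fderiv ℝ (fun z => fderiv ℝ f z 1) p 1 +
        fderiv ℝ (fun z => fderiv ℝ f z Complex.I) p Complex.I = 0


/-- A continuous function with constant exponential on a preconnected set is constant. -/
lemma rk_const_of_exp_const {S : Set ℂ} (hS : IsPreconnected S) {F : ℂ → ℂ}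
    (hF : ContinuousOn F S) (k : ℂ) (hk : ∀ z ∈ S, Complex.exp (F z) = k)
    {x y : ℂ} (hx : x ∈ S) (hy : y ∈ S) : F x = F y := by
  refine hS.induction₂' (fun x y => F x = F y) ?_ ?_ hx hy
  · intro x hx
    have h := (Metric.continuousWithinAt_iff'.1 (hF x hx)) Real.pi Real.pi_pos
    filter_upwards [h, self_mem_nhdsWithin] with y hy hyS
    have : F y = F x := by
      rw [dist_eq_norm] at hy
      have h1 := (Complex.abs_im_le_norm (F y - F x)).trans_lt hy
      rw [abs_lt] at h1
      have h2 : Complex.exp (F y - F x) = 1 := by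
        rw [Complex.exp_sub, hk y hyS, hk x hx, div_self]
        rw [← hk x hx]; exact Complex.exp_ne_zero _
      have h3 := Complex.log_exp h1.1 h1.2.le
      rw [h2, Complex.log_one] at h3
      exact (sub_eq_zero.1 h3.symm)
    exact ⟨this.symm, this⟩
  · intro x y z _ _ _ h1 h2; exact h1.trans h2

lemma rk_eilenberg {A B : Set ℂ} (hA : IsCompact A) (hB : IsPreconnected B)
    (hAB : Disjoint A B) {a₁ a₂ : ℂ} (ha₁ : a₁ ∈ A) (ha₂ : a₂ ∈ A) {h : ℂ → ℂ}
    (hh : ContinuousOn h B) (K : ℂ)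
    (hK : ∀ b ∈ B, Complex.exp (h b) = K * ((a₂ - b) / (a₁ - b)))
    {b₁ b₂ : ℂ} (hb₁ : b₁ ∈ B) (hb₂ : b₂ ∈ B) :
    ∃ g : ℂ → ℂ, ContinuousOn g A ∧ (∀ z ∈ A, Complex.exp (g z) = (z - b₂) / (z - b₁)) ∧
      g a₂ - g a₁ = h b₂ - h b₁ := by
  have hne : ∀ z ∈ A, ∀ b ∈ B, z - b ≠ 0 := by
    intro z hz b hb h0
    rw [sub_eq_zero] at h0
    exact Set.disjoint_left.1 hAB hz (h0 ▸ hb)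
  refine hB.induction₂' (fun b₁ b₂ => ∃ g : ℂ → ℂ, ContinuousOn g A ∧
    (∀ z ∈ A, Complex.exp (g z) = (z - b₂) / (z - b₁)) ∧
      g a₂ - g a₁ = h b₂ - h b₁) ?_ ?_ hb₁ hb₂
  · intro x hx
    have hxA : x ∉ A := fun hxA => Set.disjoint_left.1 hAB hxA hx
    have hδ : 0 < infDist x A := (hA.isClosed.notMem_iff_infDist_pos ⟨a₁, ha₁⟩).1 hxA
    have h1 := (Metric.continuousWithinAt_iff'.1 (hh x hx)) Real.pi Real.pi_pos
    have h2 : ∀ᶠ y in nhdsWithin x B, dist y x < infDist x A :=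
      Filter.Eventually.filter_mono nhdsWithin_le_nhds (Metric.ball_mem_nhds x hδ)
    filter_upwards [h1, h2, self_mem_nhdsWithin] with y hy1 hy2 hyB
    have hre : ∀ z ∈ A, 0 < ((z - y) / (z - x)).re := by
      intro z hz
      have e : (z - y) / (z - x) = 1 - (y - x) / (z - x) := by
        have := hne z hz x hx
        field_simp; ring
      have hlt : ‖(y - x) / (z - x)‖ < 1 := by
        rw [norm_div, div_lt_one (norm_pos_iff.2 (hne z hz x hx)), ← dist_eq_norm, ← dist_eq_norm,
          dist_comm z x]
        exact hy2.trans_le (infDist_le_dist_of_mem hz)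
      have := (Complex.re_le_norm ((y - x) / (z - x))).trans_lt hlt
      rw [e]; simp; linarith
    have hgc : ContinuousOn (fun z => Complex.log ((z - y) / (z - x))) A := by
      refine ContinuousOn.clog ?_ (fun z hz => Or.inl (hre z hz))
      refine ContinuousOn.div (by fun_prop) (by fun_prop) (fun z hz => hne z hz x hx)
    have hge : ∀ z ∈ A, Complex.exp (Complex.log ((z - y) / (z - x))) = (z - y) / (z - x) :=
      fun z hz => Complex.exp_log (div_ne_zero (hne z hz y hyB) (hne z hz x hx))
    have key : Complex.log ((a₂ - y) / (a₂ - x)) - Complex.log ((a₁ - y) / (a₁ - x))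
        = h y - h x := by
      have p1 := abs_lt.1 (Complex.abs_arg_lt_pi_div_two_iff.2 (Or.inl (hre a₂ ha₂)))
      have p2 := abs_lt.1 (Complex.abs_arg_lt_pi_div_two_iff.2 (Or.inl (hre a₁ ha₁)))
      rw [dist_eq_norm] at hy1
      have p3 := abs_lt.1 ((Complex.abs_im_le_norm (h y - h x)).trans_lt hy1)
      rw [← Complex.log_exp p3.1 p3.2.le]
      rw [← Complex.log_exp (x := Complex.log ((a₂ - y) / (a₂ - x)) - _)
        (by rw [Complex.sub_im, Complex.log_im, Complex.log_im]; linarith)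
        (by rw [Complex.sub_im, Complex.log_im, Complex.log_im]; linarith)]
      congr 1
      rw [Complex.exp_sub, Complex.exp_sub, hge _ ha₁, hge _ ha₂, hK y hyB, hK x hx]
      have hK0 : K ≠ 0 := by
        intro h0
        have := hK x hx
        rw [h0, zero_mul] at this
        exact Complex.exp_ne_zero _ this
      have := hne a₁ ha₁ x hx
      have := hne a₁ ha₁ y hyB
      have := hne a₂ ha₂ x hx
      have := hne a₂ ha₂ y hyB
      field_simp
    refine ⟨⟨_, hgc, hge, key⟩, ⟨fun z => - Complex.log ((z - y) / (z - x)), hgc.neg, ?_, ?_⟩⟩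
    · intro z hz
      rw [Complex.exp_neg, hge z hz, inv_div]
    · linear_combination -key
  · rintro x y z hx hy hz ⟨g, hg, hge, hgd⟩ ⟨g', hg', hge', hgd'⟩
    refine ⟨fun z => g z + g' z, hg.add hg', ?_, by linear_combination hgd + hgd'⟩
    intro w hw
    rw [Complex.exp_add, hge w hw, hge' w hw]
    have := hne w hw x hx
    have := hne w hw y hy
    field_simp

/-- `log (1 - x) - log (1 - x⁻¹)` on the unit circle. -/
lemma rk_log_diff {ψ : ℝ} (h0 : 0 < ψ) (h2 : ψ < 2 * Real.pi) {x : ℂ}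
    (hx : x = Complex.exp (ψ * I)) :
    Complex.log (1 - x) - Complex.log (1 - x⁻¹) = (ψ - Real.pi) * I := by
  have hcos : Real.cos ψ < 1 := by
    refine lt_of_le_of_ne (Real.cos_le_one _) fun h => ?_
    rw [Real.cos_eq_one_iff_of_lt_of_lt (by linarith) h2] at h
    exact h0.ne' h
  have hxi : x⁻¹ = Complex.exp (((-ψ : ℝ) : ℂ) * I) := by
    rw [hx, ← Complex.exp_neg]; push_cast; ring_nf
  have r1 : 0 < (1 - x).re := by
    rw [hx, Complex.sub_re, Complex.exp_ofReal_mul_I_re]; simp; exact hcos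
  have r2 : 0 < (1 - x⁻¹).re := by
    rw [hxi, Complex.sub_re, Complex.exp_ofReal_mul_I_re]; simp; exact hcos
  have n1 : 1 - x ≠ 0 := fun h => by rw [h] at r1; simp at r1
  have n2 : 1 - x⁻¹ ≠ 0 := fun h => by rw [h] at r2; simp at r2
  have hx0 : x ≠ 0 := by rw [hx]; exact Complex.exp_ne_zero _
  have p1 := abs_lt.1 (Complex.abs_arg_lt_pi_div_two_iff.2 (Or.inl r1))
  have p2 := abs_lt.1 (Complex.abs_arg_lt_pi_div_two_iff.2 (Or.inl r2))
  have e1 := Complex.log_exp (x := Complex.log (1 - x) - Complex.log (1 - x⁻¹))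
    (by rw [Complex.sub_im, Complex.log_im, Complex.log_im]; linarith)
    (by rw [Complex.sub_im, Complex.log_im, Complex.log_im]; linarith)
  have e2 := Complex.log_exp (x := (ψ - Real.pi) * I) (by simp; linarith) (by simp; linarith)
  rw [← e1, ← e2]
  congr 1
  rw [Complex.exp_sub, Complex.exp_log n1, Complex.exp_log n2, sub_mul, Complex.exp_sub,
    Complex.exp_pi_mul_I, ← hx]
  have : 1 - x⁻¹ = -(1 - x) / x := by field_simp; ring
  rw [this]
  field_simp

lemma rk_slit {ψ : ℝ} (h0 : 0 < ψ) (h2 : ψ < 2 * Real.pi) {x : ℂ}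
    (hx : x = Complex.exp (ψ * I)) {t : ℝ} (ht1 : t ≤ 1) (ht0 : 0 ≤ t) :
    1 - t * x ∈ Complex.slitPlane := by
  left
  have hcos : Real.cos ψ < 1 := by
    refine lt_of_le_of_ne (Real.cos_le_one _) fun h => ?_
    rw [Real.cos_eq_one_iff_of_lt_of_lt (by linarith) h2] at h
    exact h0.ne' h
  rw [hx, Complex.sub_re, Complex.re_ofReal_mul, Complex.exp_ofReal_mul_I_re]
  simp only [one_re, sub_pos]
  rcases ht0.eq_or_lt with h | h
  · rw [← h]; simp
  · nlinarith

/-- The crossing lemma. -/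
lemma rk_cross {p a₁ a₂ b₁ b₂ : ℂ} {ψ₁₁ ψ₁₂ ψ₂₁ ψ₂₂ : ℝ}
    (h11 : (a₁ - p) / (b₁ - p) = Complex.exp (ψ₁₁ * I))
    (h12 : (a₁ - p) / (b₂ - p) = Complex.exp (ψ₁₂ * I))
    (h21 : (a₂ - p) / (b₁ - p) = Complex.exp (ψ₂₁ * I))
    (h22 : (a₂ - p) / (b₂ - p) = Complex.exp (ψ₂₂ * I))
    (l11 : ψ₁₁ ∈ Ioo 0 (2 * Real.pi)) (l12 : ψ₁₂ ∈ Ioo 0 (2 * Real.pi))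
    (l21 : ψ₂₁ ∈ Ioo 0 (2 * Real.pi)) (l22 : ψ₂₂ ∈ Ioo 0 (2 * Real.pi))
    (hne : ψ₂₂ - ψ₂₁ - ψ₁₂ + ψ₁₁ ≠ 0)
    {Q Q' : Set ℂ} (hQc : IsCompact Q) (hQ : IsPreconnected Q) (hQ' : IsPreconnected Q')
    (ha₁ : a₁ ∈ Q) (ha₂ : a₂ ∈ Q) (hb₁ : b₁ ∈ Q') (hb₂ : b₂ ∈ Q')
    (hd : Disjoint Q Q') (hdα : Disjoint (segment ℝ p a₁ ∪ segment ℝ p a₂) Q')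
    (hdβ : Disjoint Q (segment ℝ p b₁ ∪ segment ℝ p b₂)) : False := by
  have hpa₁ : a₁ - p ≠ 0 := fun h => by
    rw [h, zero_div] at h11; exact Complex.exp_ne_zero _ h11.symm
  have hpa₂ : a₂ - p ≠ 0 := fun h => by
    rw [h, zero_div] at h21; exact Complex.exp_ne_zero _ h21.symm
  have hpb₁ : b₁ - p ≠ 0 := fun h => by
    rw [h, div_zero] at h11; exact Complex.exp_ne_zero _ h11.symm
  have hpb₂ : b₂ - p ≠ 0 := fun h => by
    rw [h, div_zero] at h12; exact Complex.exp_ne_zero _ h12.symm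
  -- slit plane facts
  have S : ∀ (a b : ℂ) (ψ : ℝ), (a - p) / (b - p) = Complex.exp (ψ * I) →
      ψ ∈ Ioo 0 (2 * Real.pi) → ∀ z ∈ segment ℝ p a,
      1 - (z - p) / (b - p) ∈ Complex.slitPlane := by
    intro a b ψ h l z hz
    rw [segment_eq_image'] at hz
    obtain ⟨t, ht, rfl⟩ := hz
    have := rk_slit l.1 l.2 h ht.2 ht.1
    convert this using 2
    simp only [real_smul]
    ring
  have S' : ∀ (a b : ℂ) (ψ : ℝ), (a - p) / (b - p) = Complex.exp (ψ * I) →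
      ψ ∈ Ioo 0 (2 * Real.pi) → ∀ z ∈ segment ℝ p b,
      1 - (z - p) / (a - p) ∈ Complex.slitPlane := by
    intro a b ψ h l z hz
    refine S b a (2 * Real.pi - ψ) ?_ ⟨by linarith [l.2], by linarith [l.1]⟩ z hz
    rw [← inv_div, h, ← Complex.exp_neg]
    push_cast
    rw [sub_mul, Complex.exp_sub, Complex.exp_two_pi_mul_I, Complex.exp_neg, one_div]
  set α : Set ℂ := segment ℝ p a₁ ∪ segment ℝ p a₂ with hα
  set β : Set ℂ := segment ℝ p b₁ ∪ segment ℝ p b₂ with hβ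
  have hαc : IsPreconnected α :=
    IsPreconnected.union p (left_mem_segment _ _ _) (left_mem_segment _ _ _)
      (convex_segment _ _).isPreconnected (convex_segment _ _).isPreconnected
  have hβc : IsPreconnected β :=
    IsPreconnected.union p (left_mem_segment _ _ _) (left_mem_segment _ _ _)
      (convex_segment _ _).isPreconnected (convex_segment _ _).isPreconnected
  have hαk : IsCompact α := by
    have hs : ∀ a : ℂ, IsCompact (segment ℝ p a) := fun a => by
      rw [segment_eq_image']; exact isCompact_Icc.image (by fun_prop)
    exact (hs _).union (hs _)
  have ha₁α : a₁ ∈ α := Or.inl (right_mem_segment _ _ _)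
  have ha₂α : a₂ ∈ α := Or.inr (right_mem_segment _ _ _)
  have hb₁β : b₁ ∈ β := Or.inl (right_mem_segment _ _ _)
  have hb₂β : b₂ ∈ β := Or.inr (right_mem_segment _ _ _)
  -- first application
  have hne1 : ∀ b ∈ Q', a₁ - b ≠ 0 := fun b hb h0 => by
    rw [sub_eq_zero] at h0; exact Set.disjoint_left.1 hd ha₁ (h0 ▸ hb)
  obtain ⟨g, hg, hge, -⟩ := rk_eilenberg (A := Q ∪ α) (B := Q') (hQc.union hαk) hQ'
    (Set.disjoint_union_left.2 ⟨hd, hdα⟩) (a₁ := a₁) (a₂ := a₁) (Or.inl ha₁) (Or.inl ha₁)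
    (h := fun _ => 0) continuousOn_const 1
    (fun b hb => by simp [div_self (hne1 b hb)]) hb₁ hb₂
  -- second application
  set h : ℂ → ℂ := fun b => Complex.log (1 - (b - p) / (a₂ - p)) -
    Complex.log (1 - (b - p) / (a₁ - p)) with hh
  have sβ : ∀ z ∈ β, 1 - (z - p) / (a₂ - p) ∈ Complex.slitPlane ∧
      1 - (z - p) / (a₁ - p) ∈ Complex.slitPlane := by
    rintro z (hz | hz)
    · exact ⟨S' _ _ _ h21 l21 z hz, S' _ _ _ h11 l11 z hz⟩
    · exact ⟨S' _ _ _ h22 l22 z hz, S' _ _ _ h12 l12 z hz⟩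
  have sα : ∀ z ∈ α, 1 - (z - p) / (b₂ - p) ∈ Complex.slitPlane ∧
      1 - (z - p) / (b₁ - p) ∈ Complex.slitPlane := by
    rintro z (hz | hz)
    · exact ⟨S _ _ _ h12 l12 z hz, S _ _ _ h11 l11 z hz⟩
    · exact ⟨S _ _ _ h22 l22 z hz, S _ _ _ h21 l21 z hz⟩
  have hhc : ContinuousOn h β := by
    refine ContinuousOn.sub (ContinuousOn.clog (by fun_prop) fun z hz => (sβ z hz).1)
      (ContinuousOn.clog (by fun_prop) fun z hz => (sβ z hz).2)
  obtain ⟨g₂, hg₂, hge₂, hgd₂⟩ := rk_eilenberg (A := Q) (B := β) hQc hβc hdβ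
    (a₁ := a₁) (a₂ := a₂) ha₁ ha₂ (h := h) hhc ((a₁ - p) / (a₂ - p)) (by
      intro b hb
      have m1 := Complex.slitPlane_ne_zero (sβ b hb).1
      have m2 := Complex.slitPlane_ne_zero (sβ b hb).2
      rw [hh, Complex.exp_sub, Complex.exp_log m1, Complex.exp_log m2]
      have e1 : 1 - (b - p) / (a₂ - p) = (a₂ - b) / (a₂ - p) := by field_simp; ring
      have e2 : 1 - (b - p) / (a₁ - p) = (a₁ - b) / (a₁ - p) := by field_simp; ring
      rw [e2] at m2
      have m3 : a₁ - b ≠ 0 := fun h => by rw [h, zero_div] at m2; exact m2 rfl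
      rw [e1, e2]
      field_simp) hb₁β hb₂β
  have E1 := rk_const_of_exp_const hQ (F := fun z => g z - g₂ z)
    ((hg.mono subset_union_left).sub hg₂) 1 (by
      intro z hz
      rw [Complex.exp_sub, hge₂ z hz, ← hge z (Or.inl hz), div_self (Complex.exp_ne_zero _)])
      ha₁ ha₂
  set g₃ : ℂ → ℂ := fun z => Complex.log (1 - (z - p) / (b₂ - p)) -
    Complex.log (1 - (z - p) / (b₁ - p)) with hg₃
  have hg₃c : ContinuousOn g₃ α := by
    refine ContinuousOn.sub (ContinuousOn.clog (by fun_prop) fun z hz => (sα z hz).1)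
      (ContinuousOn.clog (by fun_prop) fun z hz => (sα z hz).2)
  have E2 := rk_const_of_exp_const hαc (F := fun z => g z - g₃ z)
    ((hg.mono subset_union_right).sub hg₃c) ((b₂ - p) / (b₁ - p)) (by
      intro z hz
      have m1 := Complex.slitPlane_ne_zero (sα z hz).1
      have m2 := Complex.slitPlane_ne_zero (sα z hz).2
      rw [Complex.exp_sub, hge z (Or.inr hz), hg₃, Complex.exp_sub, Complex.exp_log m1,
        Complex.exp_log m2]
      have e1 : 1 - (z - p) / (b₂ - p) = -(z - b₂) / (b₂ - p) := by field_simp; ring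
      have e2 : 1 - (z - p) / (b₁ - p) = -(z - b₁) / (b₁ - p) := by field_simp; ring
      rw [e1] at m1
      rw [e2] at m2
      have m3 : z - b₁ ≠ 0 := fun h => by rw [h, neg_zero, zero_div] at m2; exact m2 rfl
      have m4 : z - b₂ ≠ 0 := fun h => by rw [h, neg_zero, zero_div] at m1; exact m1 rfl
      rw [e1, e2]
      field_simp) ha₁α ha₂α
  have L11 := rk_log_diff l11.1 l11.2 h11
  have L12 := rk_log_diff l12.1 l12.2 h12
  have L21 := rk_log_diff l21.1 l21.2 h21
  have L22 := rk_log_diff l22.1 l22.2 h22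
  rw [inv_div] at L11 L12 L21 L22
  simp only [hh, hg₃] at E1 E2 hgd₂
  have fin : ((ψ₂₂ : ℂ) - ψ₂₁ - ψ₁₂ + ψ₁₁) * I = 0 := by
    linear_combination E2 - E1 + hgd₂ - L22 + L21 + L12 - L11
  rw [mul_eq_zero] at fin
  have := fin.resolve_right I_ne_zero
  apply hne
  exact_mod_cast this

lemma rk_harm {f : ℂ → ℝ} {U : Set ℂ} (hU : IsOpen U) (hf : HarmonicOnSet f U) :
    InnerProductSpace.HarmonicOnNhd f U := by
  intro x hx
  refine ⟨hf.1.contDiffAt (hU.mem_nhds hx), ?_⟩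
  filter_upwards [hU.mem_nhds hx] with z hz
  have hc : ContDiffAt ℝ 2 f z := hf.1.contDiffAt (hU.mem_nhds hz)
  have hd : DifferentiableAt ℝ (fderiv ℝ f) z :=
    (hc.fderiv_right (m := 1) (by norm_num)).differentiableAt (by norm_num)
  have h2 := hf.2 z hz
  rw [fderiv_clm_apply hd (by fun_prop), fderiv_clm_apply hd (by fun_prop)] at h2
  simp only [InnerProductSpace.laplacian_eq_iteratedFDeriv_complexPlane, iteratedFDeriv_two_apply]
  simpa using h2

lemma rk_local {v : ℂ → ℝ} {Ω : Set ℂ} (hΩ : IsOpen Ω)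
    (hv : InnerProductSpace.HarmonicOnNhd v Ω) {p : ℂ} (hp : p ∈ Ω) :
    ∃ f : ℂ → ℂ, AnalyticAt ℂ f p ∧ ∀ᶠ z in nhds p, (f z).re = v z := by
  obtain ⟨ε, hε, hb⟩ := Metric.isOpen_iff.1 hΩ p hp
  obtain ⟨F, h1, h2⟩ := InnerProductSpace.HarmonicOnNhd.exists_analyticOnNhd_ball_re_eq
    (hv.mono hb)
  exact ⟨F, h1 p (mem_ball_self hε), Filter.eventually_of_mem (ball_mem_nhds p hε) h2⟩

lemma rk_not_const {v : ℂ → ℝ} {Ω : Set ℂ} (hc : IsPreconnected Ω)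
    (hv : InnerProductSpace.HarmonicOnNhd v Ω) (hvc : ContinuousOn v (closure Ω))
    {x y : ℂ} (hx : x ∈ closure Ω) (hy : y ∈ closure Ω) (hxy : v x ≠ v y)
    {p : ℂ} (hp : p ∈ Ω) : ¬ ∀ᶠ z in nhds p, v z = v p := by
  intro h
  have hA : AnalyticOnNhd ℝ v Ω := fun z hz => HarmonicAt.analyticAt (hv z hz)
  have h1 : EqOn v (fun _ => v p) Ω :=
    hA.eqOn_of_preconnected_of_eventuallyEq (fun z _ => analyticAt_const) hc hp h
  have h2 : EqOn v (fun _ => v p) (closure Ω) :=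
    h1.of_subset_closure hvc continuousOn_const subset_closure subset_rfl
  exact hxy ((h2 hx).trans (h2 hy).symm)

lemma rk_no_max {v : ℂ → ℝ} {Ω : Set ℂ} (hΩ : IsOpen Ω)
    (hv : InnerProductSpace.HarmonicOnNhd v Ω) {p : ℂ} (hp : p ∈ Ω)
    (hnc : ¬ ∀ᶠ z in nhds p, v z = v p) : ¬ ∀ᶠ z in nhds p, v z ≤ v p := by
  intro h
  obtain ⟨f, hf, hfv⟩ := rk_local hΩ hv hp
  rcases hf.eventually_constant_or_nhds_le_map_nhds with h1 | h1
  · apply hnc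
    filter_upwards [h1, hfv] with z hz hz2
    rw [← hz2, hz, hfv.self_of_nhds]
  · have h2 : ∀ᶠ w in nhds (f p), w.re ≤ (f p).re := by
      apply h1
      rw [Filter.mem_map]
      filter_upwards [h, hfv] with z hz hz2
      simp only [mem_preimage, mem_ofPred_eq]
      rw [hz2, hfv.self_of_nhds]; exact hz
    obtain ⟨ε, hε, hb⟩ := Metric.eventually_nhds_iff.1 h2
    have := hb (y := f p + ((ε / 2 : ℝ) : ℂ)) (by
      rw [dist_eq_norm, add_sub_cancel_left, Complex.norm_real, Real.norm_of_nonneg (by linarith)]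
      linarith)
    rw [Complex.add_re, Complex.ofReal_re] at this
    linarith

lemma rk_sectors {v : ℂ → ℝ} {Ω : Set ℂ} (hΩ : IsOpen Ω)
    (hv : InnerProductSpace.HarmonicOnNhd v Ω) {p : ℂ} (hp : p ∈ Ω)
    (hnc : ¬ ∀ᶠ z in nhds p, v z = v p) (hcrit : fderiv ℝ v p = 0) :
    ∃ n : ℕ, 2 ≤ n ∧ ∃ θ : ℝ, ∀ k : ℕ, ∀ᶠ t : ℝ in nhdsWithin 0 (Ioi 0),
      0 < (-1) ^ k * (v (p + t * Complex.exp ((θ + k * (Real.pi / n) : ℝ) * I)) - v p) := by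
  obtain ⟨f, hf, hfv⟩ := rk_local hΩ hv hp
  have hF : AnalyticAt ℂ (fun z => f z - f p) p := hf.sub analyticAt_const
  have hF0 : ¬ ∀ᶠ z in nhds p, f z - f p = 0 := by
    intro h
    apply hnc
    filter_upwards [h, hfv] with z hz hz2
    rw [← hz2, sub_eq_zero.1 hz, hfv.self_of_nhds]
  obtain ⟨n, g, hg, hgp, hgz⟩ := hF.exists_eventuallyEq_pow_smul_nonzero_iff.2 hF0
  have hn0 : n ≠ 0 := by
    rintro rfl
    have := hgz.self_of_nhds
    simp at this
    exact hgp this.symm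
  have hder : deriv f p = 0 := by
    have h1 : HasFDerivAt (fun z => (f z).re) (Complex.reCLM.comp
        ((ContinuousLinearMap.toSpanSingleton ℂ (deriv f p)).restrictScalars ℝ)) p :=
      Complex.reCLM.hasFDerivAt.comp p
        (hf.differentiableAt.hasDerivAt.hasFDerivAt.restrictScalars ℝ)
    have h2 := (h1.congr_of_eventuallyEq (f₁ := v)
      (by filter_upwards [hfv] with z hz using hz.symm)).fderiv
    rw [hcrit] at h2
    have e1 := DFunLike.congr_fun h2 1
    have e2 := DFunLike.congr_fun h2 I
    simp at e1 e2
    apply Complex.ext <;> simp [← e1, e2]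
  have hn1 : n ≠ 1 := by
    rintro rfl
    have h1 : HasDerivAt (fun z => (z - p) ^ 1 • g z) (g p) p := by
      have := ((hasDerivAt_id p).sub_const p).mul hg.differentiableAt.hasDerivAt
      simp at this
      have e : (fun z => (z - p) ^ 1 • g z) = (fun x => x - p) * g := by ext z; simp
      rw [e]; exact this
    have h2 : HasDerivAt (fun z => f z - f p) (deriv f p) p :=
      hf.differentiableAt.hasDerivAt.sub_const _
    have h3 := h2.unique (h1.congr_of_eventuallyEq hgz)
    exact hgp (h3.symm.trans hder)
  have hn : (n : ℂ) ≠ 0 := by exact_mod_cast hn0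
  refine ⟨n, by omega, -(arg (g p)) / n, fun k => ?_⟩
  set δ := arg (g p) with hδ
  set e : ℂ := Complex.exp ((-δ / n + k * (Real.pi / n) : ℝ) * I) with he
  have hen : e ^ n = (-1) ^ k * Complex.exp (-δ * I) := by
    rw [he, ← Complex.exp_nat_mul, ← Complex.exp_pi_mul_I, ← Complex.exp_nat_mul, ← Complex.exp_add]
    congr 1
    push_cast
    field_simp
    ring
  have hpos : 0 < (Complex.exp (-δ * I) * g p).re := by
    have : Complex.exp (-δ * I) * g p = ‖g p‖ := by
      conv_lhs => rw [← Complex.norm_mul_exp_arg_mul_I (g p), ← hδ]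
      rw [mul_left_comm, ← Complex.exp_add]
      simp
    rw [this, Complex.ofReal_re]
    exact norm_pos_iff.2 hgp
  have hev : ∀ᶠ z in nhds p, 0 < (Complex.exp (-δ * I) * g z).re := by
    have hc : ContinuousAt (fun z => (Complex.exp (-δ * I) * g z).re) p :=
      Complex.continuous_re.continuousAt.comp (continuousAt_const.mul hg.continuousAt)
    exact hc.eventually_const_lt hpos
  have ht : Filter.Tendsto (fun t : ℝ => p + t * e) (nhdsWithin 0 (Ioi 0)) (nhds p) := by
    have : ContinuousAt (fun t : ℝ => p + t * e) 0 := by fun_prop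
    have := this.tendsto
    simp only [ofReal_zero, zero_mul, add_zero] at this
    exact this.mono_left nhdsWithin_le_nhds
  filter_upwards [ht.eventually hev, ht.eventually hgz, ht.eventually hfv, self_mem_nhdsWithin]
    with t h1 h2 h3 h4
  have h5 : v (p + t * e) - v p = (f (p + t * e) - f p).re := by
    rw [Complex.sub_re, h3, hfv.self_of_nhds]
  rw [h5, h2]
  have h6 : ((-1 : ℝ) ^ k) * ((p + t * e - p) ^ n • g (p + t * e)).re =
      t ^ n * (Complex.exp (-δ * I) * g (p + t * e)).re := by
    rw [add_sub_cancel_left, smul_eq_mul, mul_pow, hen, ← Complex.re_ofReal_mul,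
      ← Complex.re_ofReal_mul]
    congr 1
    push_cast
    have : ((-1 : ℂ) ^ k) * (-1) ^ k = 1 := by rw [← mul_pow]; simp
    linear_combination (t ^ n * (Complex.exp (-δ * I) * g (p + t * e))) * this
  rw [h6]
  exact mul_pos (pow_pos h4 n) h1

lemma rk_reach {v : ℂ → ℝ} {Ω : Set ℂ} (hΩ : IsOpen Ω) (hΩb : Bornology.IsBounded Ω)
    (hvc : ContinuousOn v (closure Ω))
    (hmax : ∀ p ∈ Ω, ¬ ∀ᶠ z in nhds p, v z ≤ v p) {c : ℝ} {a : ℂ} (ha : a ∈ Ω) (hca : c < v a) :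
    ∃ q ∈ frontier Ω, c < v q ∧ ∃ Q : Set ℂ, IsCompact Q ∧ IsPreconnected Q ∧
      (∀ z ∈ Q, z ∈ closure Ω ∧ c < v z) ∧ a ∈ Q ∧ q ∈ Q := by
  set U : Set ℂ := Ω ∩ v ⁻¹' Ioi c with hU
  have hUo : IsOpen U := (hvc.mono subset_closure).isOpen_inter_preimage hΩ isOpen_Ioi
  have haU : a ∈ U := ⟨ha, hca⟩
  set A := connectedComponentIn U a with hA
  have hAo : IsOpen A := hUo.connectedComponentIn
  have haA : a ∈ A := mem_connectedComponentIn haU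
  have hAU : A ⊆ U := connectedComponentIn_subset _ _
  have hAc : IsConnected A := isConnected_connectedComponentIn_iff.2 haU
  have hclA : closure A ⊆ closure Ω := closure_mono (hAU.trans inter_subset_left)
  have hAk : IsCompact (closure A) := hΩb.isCompact_closure.of_isClosed_subset isClosed_closure hclA
  obtain ⟨m, hmA, hm⟩ := hAk.exists_isMaxOn ⟨a, subset_closure haA⟩ (hvc.mono hclA)
  have hcm : c < v m := hca.trans_le (hm (subset_closure haA))
  have hmΩ : m ∉ Ω := by
    intro hmΩ
    have hmA' : m ∈ A := by
      have : IsPreconnected (insert m A) :=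
        hAc.isPreconnected.subset_closure (subset_insert _ _)
          (insert_subset hmA subset_closure)
      have h2 := this.subset_connectedComponentIn (x := a) (F := U) (mem_insert_of_mem _ haA)
        (insert_subset ⟨hmΩ, hcm⟩ hAU)
      exact h2 (mem_insert _ _)
    apply hmax m hmΩ
    filter_upwards [hAo.mem_nhds hmA'] with z hz
    exact hm (subset_closure hz)
  have hmcl : m ∈ closure Ω := hclA hmA
  have hmf : m ∈ frontier Ω := by rw [hΩ.frontier_eq]; exact ⟨hmcl, hmΩ⟩
  have hcont : ∀ᶠ z in nhdsWithin m (closure Ω), c < v z :=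
    (hvc m hmcl).eventually_const_lt hcm
  obtain ⟨ε, hε, hball⟩ := Metric.mem_nhdsWithin_iff.1 hcont
  obtain ⟨a', ha'A, ha'⟩ := Metric.mem_closure_iff.1 hmA (ε / 2) (by linarith)
  have hfk : IsCompact (frontier Ω) :=
    hΩb.isCompact_closure.of_isClosed_subset isClosed_frontier frontier_subset_closure
  obtain ⟨q, hq, hqd⟩ := hfk.exists_infDist_eq_dist ⟨m, hmf⟩ a'
  have hd : dist a' q ≤ dist a' m := hqd ▸ infDist_le_dist_of_mem hmf
  have ha'Ω : a' ∈ Ω := (hAU ha'A).1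
  have hqΩ : q ∉ Ω := by rw [hΩ.frontier_eq] at hq; exact hq.2
  have hpos : 0 < dist a' q := dist_pos.2 (fun h => hqΩ (h ▸ ha'Ω))
  have hbΩ : ball a' (dist a' q) ⊆ Ω := by
    refine (convex_ball a' (dist a' q)).isPreconnected.subset_left_of_subset_union hΩ
      (isClosed_closure (s := Ω)).isOpen_compl (disjoint_compl_right.mono_left subset_closure)
      ?_ ⟨a', mem_ball_self hpos, ha'Ω⟩
    intro w hw
    by_contra hcon
    rw [mem_union, not_or, mem_compl_iff, not_not] at hcon
    have hwf : w ∈ frontier Ω := by rw [hΩ.frontier_eq]; exact ⟨hcon.2, hcon.1⟩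
    have := infDist_le_dist_of_mem (x := a') hwf
    rw [hqd] at this
    rw [mem_ball, dist_comm] at hw
    linarith
  have hcb : closedBall a' (dist a' q) ⊆ closure Ω := by
    rw [← closure_ball a' hpos.ne']
    exact closure_mono hbΩ
  have hseg1 : segment ℝ a' q ⊆ closure Ω :=
    ((convex_closedBall a' (dist a' q)).segment_subset (mem_closedBall_self hpos.le)
      (by rw [mem_closedBall, dist_comm])).trans hcb
  have hseg2 : segment ℝ a' q ⊆ ball m ε := by
    refine (convex_ball m ε).segment_subset ?_ ?_
    · rw [mem_ball, dist_comm]; linarith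
    · rw [mem_ball]
      have := dist_triangle_left q m a'
      rw [dist_comm m a'] at ha'
      linarith
  have hseg : ∀ z ∈ segment ℝ a' q, z ∈ closure Ω ∧ c < v z :=
    fun z hz => ⟨hseg1 hz, hball ⟨hseg2 hz, hseg1 hz⟩⟩
  have hpc := (hAo.isConnected_iff_isPathConnected.1 hAc).joinedIn a haA a' ha'A
  obtain ⟨P, hP⟩ := hpc
  refine ⟨q, hq, (hseg q (right_mem_segment _ _ _)).2, range P ∪ segment ℝ a' q, ?_, ?_, ?_, ?_, ?_⟩
  · refine (isCompact_range P.continuous).union ?_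
    rw [segment_eq_image']; exact isCompact_Icc.image (by fun_prop)
  · exact IsPreconnected.union a' ⟨1, P.target⟩ (left_mem_segment _ _ _)
      (isPreconnected_range P.continuous) (convex_segment _ _).isPreconnected
  · rintro z (⟨t, rfl⟩ | hz)
    · have := hAU (hP t)
      exact ⟨subset_closure this.1, this.2⟩
    · exact hseg z hz
  · exact Or.inl ⟨0, P.source⟩
  · exact Or.inr (right_mem_segment _ _ _)

/-- Superlevel sets of `a cos + b sin` on the boundary curve are connected. -/
lemma rk_arc {v : ℂ → ℝ} {γ : ℂ → ℂ} (hγ : ContinuousOn γ (Metric.sphere (0 : ℂ) 1)) {a b : ℝ}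
    (hb : ∀ θ : ℝ, v (γ (Complex.exp (θ * Complex.I))) = a * Real.cos θ + b * Real.sin θ)
    {c : ℝ} {q₁ q₂ : ℂ} (hq₁ : q₁ ∈ γ '' Metric.sphere (0 : ℂ) 1)
    (hq₂ : q₂ ∈ γ '' Metric.sphere (0 : ℂ) 1) (h₁ : c < v q₁) (h₂ : c < v q₂) :
    ∃ J : Set ℂ, IsCompact J ∧ IsPreconnected J ∧ J ⊆ γ '' Metric.sphere (0 : ℂ) 1 ∧
      (∀ z ∈ J, c < v z) ∧ q₁ ∈ J ∧ q₂ ∈ J := by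
  set w : ℂ := ⟨a, b⟩ with hw
  set φ := arg w with hφ
  have hform : ∀ t : ℝ, v (γ (Complex.exp (((φ + t : ℝ) : ℂ) * Complex.I))) = ‖w‖ * Real.cos t := by
    intro t
    rw [hb]
    have e1 : a = ‖w‖ * Real.cos φ := (Complex.norm_mul_cos_arg w).symm
    have e2 : b = ‖w‖ * Real.sin φ := (Complex.norm_mul_sin_arg w).symm
    have e3 : Real.cos t = Real.cos (φ + t) * Real.cos φ + Real.sin (φ + t) * Real.sin φ := by
      rw [← Real.cos_sub]; congr 1; ring
    rw [e3]
    linear_combination Real.cos (φ + t) * e1 + Real.sin (φ + t) * e2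
  have hpar : ∀ q ∈ γ '' Metric.sphere (0 : ℂ) 1, ∃ t ∈ Icc (-Real.pi) Real.pi,
      γ (Complex.exp (((φ + t : ℝ) : ℂ) * Complex.I)) = q := by
    rintro _ ⟨z, hz, rfl⟩
    have hz1 : ‖z‖ = 1 := by simpa using hz
    set y := z * Complex.exp (-φ * I) with hy
    refine ⟨arg y, ⟨(neg_pi_lt_arg _).le, arg_le_pi _⟩, ?_⟩
    congr 1
    have hy1 : ‖y‖ = 1 := by
      rw [hy, norm_mul, hz1, one_mul]
      have := Complex.norm_exp_ofReal_mul_I (-φ)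
      push_cast at this
      exact this
    have := Complex.norm_mul_exp_arg_mul_I y
    rw [hy1, Complex.ofReal_one, one_mul] at this
    push_cast
    rw [add_mul, Complex.exp_add, this, hy, mul_left_comm, ← Complex.exp_add]
    simp
  obtain ⟨t₁, ht₁, rfl⟩ := hpar q₁ hq₁
  obtain ⟨t₂, ht₂, rfl⟩ := hpar q₂ hq₂
  have hsph : ∀ t : ℝ, Complex.exp (((φ + t : ℝ) : ℂ) * Complex.I) ∈ Metric.sphere (0 : ℂ) 1 := by
    intro t; rw [mem_sphere_zero_iff_norm]; exact Complex.norm_exp_ofReal_mul_I _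
  have hcont : ContinuousOn (fun t : ℝ => γ (Complex.exp (((φ + t : ℝ) : ℂ) * Complex.I)))
      (uIcc t₁ t₂) :=
    hγ.comp (by fun_prop) (fun t _ => hsph t)
  refine ⟨(fun t : ℝ => γ (Complex.exp (((φ + t : ℝ) : ℂ) * Complex.I))) '' uIcc t₁ t₂,
    isCompact_uIcc.image_of_continuousOn hcont, isPreconnected_uIcc.image _ hcont, ?_, ?_,
    ⟨t₁, left_mem_uIcc, rfl⟩, ⟨t₂, right_mem_uIcc, rfl⟩⟩
  · rintro _ ⟨t, -, rfl⟩
    exact ⟨_, hsph t, rfl⟩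
  · rintro _ ⟨t, ht, rfl⟩
    rw [hform] at h₁ h₂
    simp only [hform]
    have key : ∀ s ∈ Icc (-Real.pi) Real.pi, |t| ≤ |s| → c < ‖w‖ * Real.cos s →
        c < ‖w‖ * Real.cos t := by
      intro s hs hts hc
      refine hc.trans_le (mul_le_mul_of_nonneg_left ?_ (norm_nonneg _))
      rw [← Real.cos_abs s, ← Real.cos_abs t]
      exact Real.cos_le_cos_of_nonneg_of_le_pi (abs_nonneg _) (abs_le.2 hs) hts
    have : |t| ≤ max |t₁| |t₂| := by
      rcases mem_uIcc.1 ht with h | h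
      · exact abs_le_max_abs_abs h.1 h.2
      · rw [max_comm]; exact abs_le_max_abs_abs h.1 h.2
    rcases le_max_iff.1 this with h | h
    · exact key t₁ ht₁ h h₁
    · exact key t₂ ht₂ h h₂

lemma rk_connect {v : ℂ → ℝ} {Ω : Set ℂ} (hΩ : IsOpen Ω) (hΩb : Bornology.IsBounded Ω)
    (hvc : ContinuousOn v (closure Ω))
    (hmax : ∀ p ∈ Ω, ¬ ∀ᶠ z in nhds p, v z ≤ v p)
    {γ : ℂ → ℂ} (hγ : ContinuousOn γ (Metric.sphere (0 : ℂ) 1))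
    (hΓ : frontier Ω = γ '' Metric.sphere (0 : ℂ) 1) {a b : ℝ}
    (hb : ∀ θ : ℝ, v (γ (Complex.exp (θ * Complex.I))) = a * Real.cos θ + b * Real.sin θ)
    {c : ℝ} {a₁ a₂ : ℂ} (ha₁ : a₁ ∈ Ω) (hca₁ : c < v a₁) (ha₂ : a₂ ∈ Ω) (hca₂ : c < v a₂) :
    ∃ Q : Set ℂ, IsCompact Q ∧ IsPreconnected Q ∧
      (∀ z ∈ Q, c < v z) ∧ a₁ ∈ Q ∧ a₂ ∈ Q := by
  obtain ⟨q₁, hq₁, hc₁, Q₁, k₁, p₁, s₁, m₁, n₁⟩ := rk_reach hΩ hΩb hvc hmax ha₁ hca₁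
  obtain ⟨q₂, hq₂, hc₂, Q₂, k₂, p₂, s₂, m₂, n₂⟩ := rk_reach hΩ hΩb hvc hmax ha₂ hca₂
  rw [hΓ] at hq₁ hq₂
  obtain ⟨J, kJ, pJ, -, sJ, j₁, j₂⟩ := rk_arc hγ hb hq₁ hq₂ hc₁ hc₂
  refine ⟨(Q₁ ∪ J) ∪ Q₂, (k₁.union kJ).union k₂, ?_, ?_, Or.inl (Or.inl m₁), Or.inr m₂⟩
  · exact (p₁.union q₁ n₁ j₁ pJ).union q₂ (Or.inr j₂) n₂ p₂
  · rintro z ((h | h) | h)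
    · exact (s₁ z h).2
    · exact sJ z h
    · exact (s₂ z h).2

theorem stmt_6 (Ω : Set ℂ) (hΩo : IsOpen Ω) (hΩb : Bornology.IsBounded Ω)
    (hΩsc : SimplyConnectedSpace Ω)
    (γ : ℂ → ℂ) (hγinj : Set.InjOn γ (Metric.sphere (0 : ℂ) 1))
    (hγC2 : ContDiffOn ℝ 2 γ (Metric.sphere (0 : ℂ) 1))
    (hΓ : frontier Ω = γ '' Metric.sphere (0 : ℂ) 1)
    (ξ η : ℂ → ℝ)
    (hξc : ContinuousOn ξ (closure Ω)) (hηc : ContinuousOn η (closure Ω))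
    (hξh : HarmonicOnSet ξ Ω) (hηh : HarmonicOnSet η Ω)
    (hξb : ∀ θ : ℝ, ξ (γ (Complex.exp (θ * Complex.I))) = Real.cos θ)
    (hηb : ∀ θ : ℝ, η (γ (Complex.exp (θ * Complex.I))) = Real.sin θ) :
    ∀ (α β : ℝ), (α, β) ≠ ((0 : ℝ), (0 : ℝ)) →
      ∀ p ∈ Ω, α • gradient ξ p + β • gradient η p ≠ 0 := by
  
  intro α β hαβ p hp hgrad
  have hξN := rk_harm hΩo hξh
  have hηN := rk_harm hΩo hηh
  have hγ : ContinuousOn γ (Metric.sphere (0 : ℂ) 1) := hγC2.continuousOn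
  have hpre : IsPreconnected Ω := by
    have : PathConnectedSpace Ω := inferInstance
    exact (isPathConnected_iff_pathConnectedSpace.2 this).isConnected.isPreconnected
  set u : ℂ → ℝ := fun z => α * ξ z + β * η z with hu
  have huN : InnerProductSpace.HarmonicOnNhd u Ω := fun x hx =>
    ((hξN x hx).const_smul (c := α)).add ((hηN x hx).const_smul (c := β))
  have huN' : InnerProductSpace.HarmonicOnNhd (-u) Ω := by
    have := huN.const_smul (c := (-1 : ℝ))
    rwa [neg_one_smul] at this
  have huc : ContinuousOn u (closure Ω) :=
    (continuousOn_const.mul hξc).add (continuousOn_const.mul hηc)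
  have hub : ∀ θ : ℝ, u (γ (Complex.exp (θ * Complex.I))) = α * Real.cos θ + β * Real.sin θ := by
    intro θ; simp only [hu, hξb, hηb]
  have hub' : ∀ θ : ℝ, (-u) (γ (Complex.exp (θ * Complex.I))) =
      (-α) * Real.cos θ + (-β) * Real.sin θ := by
    intro θ; rw [Pi.neg_apply, hub]; ring
  have hcl : ∀ θ : ℝ, γ (Complex.exp (θ * Complex.I)) ∈ closure Ω := by
    intro θ
    apply frontier_subset_closure
    rw [hΓ]
    exact ⟨_, by rw [mem_sphere_zero_iff_norm]; exact Complex.norm_exp_ofReal_mul_I _, rfl⟩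
  have hex : ∃ x ∈ closure Ω, ∃ y ∈ closure Ω, u x ≠ u y := by
    by_cases hα : α = 0
    · have hβ : β ≠ 0 := fun h => hαβ (by rw [hα, h])
      refine ⟨_, hcl (Real.pi / 2), _, hcl 0, ?_⟩
      rw [hub, hub, hα]
      simpa using hβ
    · refine ⟨_, hcl 0, _, hcl Real.pi, ?_⟩
      rw [hub, hub]
      simp only [Real.cos_zero, Real.sin_zero, Real.cos_pi, Real.sin_pi]
      intro h
      apply hα
      linarith
  obtain ⟨x, hx, y, hy, hxy⟩ := hex
  have hnc : ∀ q ∈ Ω, ¬ ∀ᶠ z in nhds q, u z = u q := fun q hq =>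
    rk_not_const hpre huN huc hx hy hxy hq
  have hmax : ∀ q ∈ Ω, ¬ ∀ᶠ z in nhds q, u z ≤ u q := fun q hq =>
    rk_no_max hΩo huN hq (hnc q hq)
  have hmax' : ∀ q ∈ Ω, ¬ ∀ᶠ z in nhds q, (-u) z ≤ (-u) q := fun q hq =>
    rk_no_max hΩo huN' hq (by
      intro h
      apply hnc q hq
      filter_upwards [h] with z hz
      simpa using hz)
  have hcrit : fderiv ℝ u p = 0 := by
    have dξ : DifferentiableAt ℝ ξ p := (hξN p hp).1.differentiableAt two_ne_zero
    have dη : DifferentiableAt ℝ η p := (hηN p hp).1.differentiableAt two_ne_zero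
    have e : fderiv ℝ u p = α • fderiv ℝ ξ p + β • fderiv ℝ η p :=
      ((dξ.hasFDerivAt.const_mul α).add (dη.hasFDerivAt.const_mul β)).fderiv
    rw [e]
    have h1 := congrArg (InnerProductSpace.toDual ℝ ℂ) hgrad
    rw [map_add, map_smulₛₗ, map_smulₛₗ, gradient, gradient, LinearIsometryEquiv.apply_symm_apply,
      LinearIsometryEquiv.apply_symm_apply, map_zero] at h1
    exact h1
  obtain ⟨n, hn, θ, hsec⟩ := rk_sectors hΩo huN hp (hnc p hp) hcrit
  set τ : ℝ := Real.pi / n with hτ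
  have hn' : (2 : ℝ) ≤ n := by exact_mod_cast hn
  have hτ0 : 0 < τ := div_pos Real.pi_pos (by linarith)
  have hτ1 : τ ≤ Real.pi / 2 := div_le_div_of_nonneg_left Real.pi_pos.le (by norm_num) hn'
  set ω : ℕ → ℂ := fun k => Complex.exp ((θ + k * τ : ℝ) * I) with hω
  have hΩev : ∀ k : ℕ, ∀ᶠ t : ℝ in nhdsWithin 0 (Ioi 0), p + t * ω k ∈ Ω := by
    intro k
    have hc : ContinuousAt (fun t : ℝ => p + t * ω k) 0 := by fun_prop
    have hc' := hc.tendsto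
    simp only [ofReal_zero, zero_mul, add_zero] at hc'
    exact (hc'.mono_left nhdsWithin_le_nhds).eventually (hΩo.mem_nhds hp)
  have hall : ∀ᶠ t : ℝ in nhdsWithin 0 (Ioi 0), ∀ k ∈ Finset.range 4,
      p + t * ω k ∈ Ω ∧ 0 < (-1) ^ k * (u (p + t * ω k) - u p) := by
    rw [Filter.eventually_all_finset]
    intro k _
    exact (hΩev k).and (hsec k)
  obtain ⟨r, hr, hIoc⟩ := (mem_nhdsGT_iff_exists_Ioc_subset).1 hall
  have hr : (0 : ℝ) < r := hr
  have hpt : ∀ k ∈ Finset.range 4, p + r * ω k ∈ Ω ∧ 0 < (-1) ^ k * (u (p + r * ω k) - u p) :=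
    fun k hk => hIoc ⟨hr, le_rfl⟩ k hk
  have hseg : ∀ k ∈ Finset.range 4, ∀ z ∈ segment ℝ p (p + r * ω k),
      0 ≤ (-1) ^ k * (u z - u p) := by
    intro k hk z hz
    rw [segment_eq_image'] at hz
    obtain ⟨s, hs, rfl⟩ := hz
    rcases hs.1.eq_or_lt with h | h
    · rw [← h]; simp
    · have h1 : s * r ∈ Ioc 0 r := ⟨mul_pos h hr, by nlinarith [hs.2]⟩
      have h2 := (hIoc h1 k hk).2.le
      have e : p + s • (p + r * ω k - p) = p + ((s * r : ℝ) : ℂ) * ω k := by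
        rw [real_smul]; push_cast; ring
      simp only [e]
      exact h2
  have i0 := hpt 0 (by simp)
  have i1 := hpt 1 (by simp)
  have i2 := hpt 2 (by simp)
  have i3 := hpt 3 (by simp)
  have s0 := hseg 0 (by simp)
  have s1 := hseg 1 (by simp)
  have s2 := hseg 2 (by simp)
  have s3 := hseg 3 (by simp)
  norm_num at i0 i1 i2 i3 s0 s1 s2 s3
  obtain ⟨Q, hQk, hQ, hQu, ha₁, ha₂⟩ := rk_connect hΩo hΩb huc hmax hγ hΓ hub
    (c := u p) i0.1 i0.2 i2.1 i2.2
  obtain ⟨Q', -, hQ', hQu', hb₁, hb₂⟩ := rk_connect hΩo hΩb huc.neg hmax' hγ hΓ hub'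
    (c := - u p) i1.1 (by simpa using i1.2) i3.1 (by simpa using i3.2)
  have hrat : ∀ (j k m : ℕ) (ψ : ℝ), ψ = (j - k) * τ + m * (2 * Real.pi) →
      (p + r * ω j - p) / (p + r * ω k - p) = Complex.exp (ψ * I) := by
    intro j k m ψ hψ
    have hr0 : (r : ℂ) ≠ 0 := by exact_mod_cast hr.ne'
    rw [add_sub_cancel_left, add_sub_cancel_left, mul_div_mul_left _ _ hr0, hω, ← Complex.exp_sub,
      hψ]
    have e1 : (((j - k) * τ + m * (2 * Real.pi) : ℝ) : ℂ) * I =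
        (((θ + j * τ : ℝ) : ℂ) * I - ((θ + k * τ : ℝ) : ℂ) * I) + m * (2 * Real.pi * I) := by
      push_cast; ring
    rw [e1, Complex.exp_add, Complex.exp_nat_mul_two_pi_mul_I, mul_one]
  have hπ := Real.pi_pos
  refine rk_cross (p := p) (a₁ := p + r * ω 0) (a₂ := p + r * ω 2) (b₁ := p + r * ω 1)
    (b₂ := p + r * ω 3) (ψ₁₁ := 2 * Real.pi - τ) (ψ₁₂ := 2 * Real.pi - 3 * τ) (ψ₂₁ := τ)
    (ψ₂₂ := 2 * Real.pi - τ)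
    (hrat 0 1 1 _ (by push_cast; ring)) (hrat 0 3 1 _ (by push_cast; ring))
    (hrat 2 1 0 _ (by push_cast; ring)) (hrat 2 3 1 _ (by push_cast; ring))
    ⟨by linarith, by linarith⟩ ⟨by linarith, by linarith⟩ ⟨by linarith, by linarith⟩
    ⟨by linarith, by linarith⟩ (by intro h; linarith) hQk hQ hQ' ha₁ ha₂ hb₁ hb₂ ?_ ?_ ?_
  · rw [Set.disjoint_left]
    intro z hz hz'
    have h1 := hQu z hz
    have h2 := hQu' z hz'
    rw [Pi.neg_apply] at h2
    linarith
  · rw [Set.disjoint_left]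
    rintro z (hz | hz) hz'
    · have h1 := s0 z hz
      have h2 := hQu' z hz'
      rw [Pi.neg_apply] at h2
      linarith
    · have h1 := s2 z hz
      have h2 := hQu' z hz'
      rw [Pi.neg_apply] at h2
      linarith
  · rw [Set.disjoint_left]
    rintro z hz (hz' | hz')
    · have h1 := s1 z hz'
      have h2 := hQu z hz
      linarith
    · have h1 := s3 z hz'
      have h2 := hQu z hz
      linarith
end

section
/- Let Ω ⊂ ℂ be a bounded, open, simply connected set whose frontier Γ = ∂Ω equals the image of an injective, twice continuously differentiable map γ : S¹ → ℂ, and let ξ, η : closure(Ω) → ℝ be continuous on closure(Ω), harmonic on Ω, with ξ(γ(e^{iθ})) = cos θ and η(γ(e^{iθ})) = sin θ for all θ. Then the Jacobian determinant of the map g = (ξ, η) : Ω → ℝ², namely ∂ξ/∂x · ∂η/∂y − ∂η/∂x · ∂ξ/∂y, is nonzero at every point of Ω; consequently g is a local diffeomorphism at every point of Ω. -/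
open Complex Metric Set

section Helpers

open Filter Topology InnerProductSpace


lemma log_quotient {X K : Set ℂ} (hX : IsPreconnected X)
    (hsep : ∀ B ∈ X, ∃ ε > 0, ∀ z ∈ K, ε ≤ ‖z - B‖) {A B : ℂ} (hA : A ∈ X) (hB : B ∈ X) :
    ∃ l : ℂ → ℂ, ContinuousOn l K ∧ ∀ z ∈ K, exp (l z) = (z - A) / (z - B) := by
  have hne : ∀ B ∈ X, ∀ z ∈ K, z - B ≠ 0 := by
    intro B hB z hz h
    obtain ⟨ε, hε, h1⟩ := hsep B hB
    have := h1 z hz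
    rw [h, norm_zero] at this
    linarith
  refine hX.induction₂ (P := fun A B => A ∈ X → B ∈ X → ∃ l : ℂ → ℂ, ContinuousOn l K ∧ ∀ z ∈ K, exp (l z) = (z - A) / (z - B)) ?_ ?_ ?_ hA hB hA hB
  · intro x hx
    obtain ⟨ε, hε, h1⟩ := hsep x hx
    filter_upwards [mem_nhdsWithin_of_mem_nhds (ball_mem_nhds x hε)] with y hy _ _
    have hs : ∀ z ∈ K, (z - y) / (z - x) ∈ slitPlane := by
      intro z hz
      have h2 : (z - y) / (z - x) = 1 + (x - y) / (z - x) := by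
        have := hne x hx z hz
        field_simp
        ring
      rw [h2]
      apply mem_slitPlane_of_norm_lt_one
      rw [norm_div, div_lt_one (by have := h1 z hz; linarith)]
      have := hy
      rw [mem_ball, dist_comm, dist_eq_norm] at this
      linarith [h1 z hz]
    refine ⟨fun z => - log ((z - y) / (z - x)), ?_, ?_⟩
    · apply ContinuousOn.neg
      apply ContinuousOn.clog
      · exact ContinuousOn.div (by fun_prop) (by fun_prop) (hne x hx)
      · exact hs
    · intro z hz
      rw [exp_neg, exp_log (slitPlane_ne_zero (hs z hz)), inv_div]
  · intro x y z hx hy hz h1 h2 _ _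
    obtain ⟨l1, c1, e1⟩ := h1 hx hy
    obtain ⟨l2, c2, e2⟩ := h2 hy hz
    refine ⟨fun w => l1 w + l2 w, c1.add c2, fun w hw => ?_⟩
    rw [exp_add, e1 w hw, e2 w hw]
    have := hne y hy w hw
    have := hne z hz w hw
    field_simp
  · intro x y hx hy h1 _ _
    obtain ⟨l1, c1, e1⟩ := h1 hx hy
    refine ⟨fun w => - l1 w, c1.neg, fun w hw => ?_⟩
    rw [exp_neg, e1 w hw, inv_div]

lemma const_of_exp_eq_one {X : Set ℂ} (hX : IsPreconnected X) {h : ℂ → ℂ} (hc : ContinuousOn h X)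
    (he : ∀ z ∈ X, exp (h z) = 1) {x y : ℂ} (hx : x ∈ X) (hy : y ∈ X) : h x = h y := by
  refine hX.induction₂ (P := fun x y => h x = h y) ?_ ?_ ?_ hx hy
  · intro x hx
    have h1 := hc x hx
    have h2 : ∀ᶠ y in 𝓝[X] x, h y ∈ ball (h x) (2 * Real.pi) :=
      h1 (ball_mem_nhds _ (by positivity))
    filter_upwards [h2, self_mem_nhdsWithin] with y hy hyX
    obtain ⟨n, hn⟩ := exp_eq_one_iff.1 (he x hx)
    obtain ⟨m, hm⟩ := exp_eq_one_iff.1 (he y hyX)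
    rw [mem_ball, dist_eq_norm, hn, hm, ← sub_mul, norm_mul, ← Int.cast_sub] at hy
    have h3 : ‖(2 * Real.pi * I : ℂ)‖ = 2 * Real.pi := by
      simp [abs_of_pos Real.pi_pos]
    rw [h3, Complex.norm_intCast] at hy
    have h4 : |((m - n : ℤ) : ℝ)| < 1 := by
      by_contra hh
      push Not at hh
      nlinarith [Real.pi_pos]
    have h5 : |m - n| < 1 := by exact_mod_cast h4
    have h6 := Int.abs_lt_one_iff.1 h5
    have : m = n := by omega
    rw [hn, hm, this]
  · intro x y z _ _ _ h1 h2
    exact h1.trans h2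
  · intro x y _ _ h1
    exact h1.symm

open scoped ComplexOrder in
lemma crossing {Xp Xm : Set ℂ} {p d : ℂ} {α : ℝ} (hd : d ≠ 0) (hα : 0 < α) (hα2 : α ≤ Real.pi / 2)
    (hp : IsPreconnected Xp) (hm : IsPreconnected Xm)
    (hsep : ∀ B ∈ Xm, ∃ ε > 0, ∀ z ∈ insert p Xp, ε ≤ ‖z - B‖) (hpX : p ∉ Xp)
    (h0 : ∀ t : ℝ, 0 < t → t ≤ 1 → p + t * d ∈ Xp)
    (h1 : ∀ t : ℝ, 0 < t → t ≤ 1 → p + t * (d * exp (α * I)) ∈ Xm)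
    (h2 : ∀ t : ℝ, 0 < t → t ≤ 1 → p + t * (d * exp (α * I) * exp (α * I)) ∈ Xp)
    (h3 : ∀ t : ℝ, 0 < t → t ≤ 1 → p + t * (d * exp (-(α * I))) ∈ Xm) : False := by
  set ω := exp (α * I) with hω
  have hω0 : ω ≠ 0 := exp_ne_zero _
  have hωi : exp (-(α * I)) = ω⁻¹ := exp_neg _
  rw [hωi] at h3
  have hA := h1 1 one_pos le_rfl
  have hB := h3 1 one_pos le_rfl
  simp only [ofReal_one, one_mul] at hA hB
  obtain ⟨l, hlc, hle⟩ := log_quotient hm hsep hA hB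
  have hdisj : ∀ z ∈ Xp, z ∉ Xm := by
    intro z hz hz'
    obtain ⟨ε, hε, h⟩ := hsep z hz'
    have := h z (mem_insert_of_mem _ hz)
    simp at this
    linarith
  have hzp : ∀ z ∈ Xp, z - p ≠ 0 := by
    intro z hz h
    rw [sub_eq_zero] at h
    exact hpX (h ▸ hz)
  have hslit : ∀ e : ℂ, (∀ t : ℝ, 0 < t → t ≤ 1 → p + t * e ∈ Xm) → ∀ z ∈ Xp,
      1 - e / (z - p) ∈ slitPlane := by
    intro e he z hz
    by_contra hns
    rw [mem_slitPlane_iff_not_le_zero, not_not] at hns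
    have h5 : (1 : ℂ) ≤ e / (z - p) := by simpa using hns
    rw [Complex.le_def] at h5
    obtain ⟨h5, h6⟩ := h5
    set w := e / (z - p) with hw
    have hwr : w = (w.re : ℂ) := by
      apply Complex.ext <;> simp
      simpa using h6.symm
    simp only [one_re] at h5
    have hwne : w.re ≠ 0 := by linarith
    have := he (w.re)⁻¹ (by positivity) (inv_le_one_of_one_le₀ h5)
    have hz2 : p + ((w.re⁻¹ : ℝ) : ℂ) * e = z := by
      have h7 : e = w * (z - p) := by rw [hw]; field_simp [hzp z hz]
      rw [h7, ofReal_inv, ← hwr, ← mul_assoc, inv_mul_cancel₀, one_mul]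
      · ring
      · intro h8; rw [h8] at hwne; simp at hwne
    rw [hz2] at this
    exact hdisj z hz this
  let L : ℂ → ℂ := fun z => log (1 - (d * ω) / (z - p)) - log (1 - (d * ω⁻¹) / (z - p))
  have hLc : ContinuousOn L Xp := by
    apply ContinuousOn.sub
    · apply ContinuousOn.clog _ (hslit _ h1)
      exact continuousOn_const.sub (continuousOn_const.div (by fun_prop) hzp)
    · apply ContinuousOn.clog _ (hslit _ h3)
      exact continuousOn_const.sub (continuousOn_const.div (by fun_prop) hzp)
  have hLe : ∀ z ∈ Xp, exp (l z - L z) = 1 := by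
    intro z hz
    have e1 := slitPlane_ne_zero (hslit _ h1 z hz)
    have e3 := slitPlane_ne_zero (hslit _ h3 z hz)
    rw [exp_sub, exp_sub, exp_log e1, exp_log e3, hle z (mem_insert_of_mem _ hz)]
    have e0 := hzp z hz
    have f1 : 1 - d * ω / (z - p) = (z - (p + d * ω)) / (z - p) := by field_simp; ring
    have f3 : 1 - d * ω⁻¹ / (z - p) = (z - (p + d * ω⁻¹)) / (z - p) := by field_simp; ring
    rw [f1] at e1 ⊢
    rw [f3] at e3 ⊢
    have g1 : z - (p + d * ω) ≠ 0 := fun h => e1 (by rw [h, zero_div])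
    have g3 : z - (p + d * ω⁻¹) ≠ 0 := fun h => e3 (by rw [h, zero_div])
    generalize z - (p + d * ω) = a at *
    generalize z - (p + d * ω⁻¹) = b at *
    generalize z - p = c at *
    field_simp
  have hcst : ∀ x ∈ Xp, ∀ y ∈ Xp, l x - L x = l y - L y := fun x hx y hy =>
    const_of_exp_eq_one hp ((hlc.mono (subset_insert _ _)).sub hLc) hLe hx hy
  -- limits along rays
  have harg : ∀ e : ℂ, ∀ t : ℝ, 0 < t → ((1 : ℂ) - e / t).arg = ((t : ℂ) - e).arg := by
    intro e t ht
    have : (t : ℂ) - e = (t : ℝ) * ((1 : ℂ) - e / t) := by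
      have : (t : ℂ) ≠ 0 := by exact_mod_cast ht.ne'
      field_simp
    rw [this, arg_real_mul _ ht]
  have hargexp : ∀ x : ℝ, -Real.pi < x - Real.pi → x - Real.pi < Real.pi →
      Tendsto (fun t : ℝ => ((t : ℂ) - exp (x * I)).arg) (𝓝[>] 0) (𝓝 (x - Real.pi)) := by
    intro x hx1 hx2
    have e1 : -exp (x * I) = exp ((x - Real.pi : ℝ) * I) := by
      push_cast
      rw [sub_mul, exp_sub, exp_pi_mul_I, div_neg, div_one]
    have e2 : (-exp (x * I)).arg = x - Real.pi := by
      rw [e1, arg_exp_mul_I]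
      rw [toIocMod_eq_self]
      constructor
      · exact hx1
      · linarith
    have e3 : ContinuousAt arg (-exp (x * I)) := by
      apply continuousAt_arg
      rw [mem_slitPlane_iff_arg, e2]
      refine ⟨hx2.ne, ?_⟩
      simp
    have e4 : Tendsto (fun t : ℝ => (t : ℂ) - exp (x * I)) (𝓝[>] 0) (𝓝 (-exp (x * I))) := by
      have : ContinuousAt (fun t : ℝ => (t : ℂ) - exp (x * I)) 0 := by fun_prop
      have := this.tendsto.mono_left (nhdsWithin_le_nhds (s := Ioi 0))
      simpa using this
    have := e3.tendsto.comp e4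
    rw [e2] at this
    exact this
  have hconj : ∀ x : ℝ, 0 < x → x < 2 * Real.pi →
      Tendsto (fun t : ℝ => ((t : ℂ) - exp (-(x * I))).arg) (𝓝[>] 0) (𝓝 (Real.pi - x)) := by
    intro x hx1 hx2
    have e1 := hargexp (2 * Real.pi - x) (by linarith) (by linarith)
    have e2 : exp ((2 * Real.pi - x : ℝ) * I) = exp (-(x * I)) := by
      push_cast
      rw [sub_mul, exp_sub, exp_two_pi_mul_I, exp_neg, one_div]
    rw [e2] at e1
    convert e1 using 2
    ring
  have hπ := Real.pi_pos
  have hev : ∀ᶠ t : ℝ in 𝓝[>] 0, 0 < t ∧ t ≤ 1 :=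
    Ioc_mem_nhdsGT one_pos
  have lim0 : Tendsto (fun t : ℝ => (L (p + t * d)).im) (𝓝[>] 0) (𝓝 ((α - Real.pi) - (Real.pi - α))) := by
    refine ((hargexp α (by linarith) (by linarith)).sub (hconj α hα (by linarith))).congr' ?_
    filter_upwards [hev] with t ht
    have ht0 : (t : ℂ) ≠ 0 := by exact_mod_cast ht.1.ne'
    have q1 : d * ω / (p + t * d - p) = ω / t := by
      rw [add_sub_cancel_left]; field_simp
    have q2 : d * ω⁻¹ / (p + t * d - p) = ω⁻¹ / t := by
      rw [add_sub_cancel_left]; field_simp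
    simp only [L, sub_im, log_im]
    rw [q1, q2, harg _ t ht.1, harg _ t ht.1, ← hω, hωi]
  have lim2 : Tendsto (fun t : ℝ => (L (p + t * (d * ω * ω))).im) (𝓝[>] 0)
      (𝓝 ((Real.pi - α) - (Real.pi - (3 * α)))) := by
    have k := hconj (3 * α) (by linarith) (by linarith)
    refine ((hconj α hα (by linarith)).sub k).congr' ?_
    filter_upwards [hev] with t ht
    have ht0 : (t : ℂ) ≠ 0 := by exact_mod_cast ht.1.ne'
    have q1 : d * ω / (p + t * (d * ω * ω) - p) = ω⁻¹ / t := by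
      rw [add_sub_cancel_left]; field_simp
    have q2 : d * ω⁻¹ / (p + t * (d * ω * ω) - p) = (ω⁻¹)^3 / t := by
      rw [add_sub_cancel_left]; field_simp
    have q3 : exp (-(((3 * α : ℝ) : ℂ) * I)) = (ω⁻¹)^3 := by
      rw [← hωi, ← exp_nat_mul]; congr 1; push_cast; ring
    simp only [L, sub_im, log_im]
    rw [q1, q2, harg _ t ht.1, harg _ t ht.1, q3, hωi]
  have liml : ∀ e : ℂ, (∀ t : ℝ, 0 < t → t ≤ 1 → p + t * e ∈ Xp) →
      Tendsto (fun t : ℝ => (l (p + t * e)).im) (𝓝[>] 0) (𝓝 ((l p).im)) := by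
    intro e he
    have c1 : ContinuousWithinAt l (insert p Xp) p := hlc p (mem_insert _ _)
    have c2 : Tendsto (fun t : ℝ => p + t * e) (𝓝[>] 0) (𝓝[insert p Xp] p) := by
      rw [tendsto_nhdsWithin_iff]
      constructor
      · have : ContinuousAt (fun t : ℝ => p + t * e) 0 := by fun_prop
        have := this.tendsto.mono_left (nhdsWithin_le_nhds (s := Ioi 0))
        simpa using this
      · filter_upwards [hev] with t ht
        exact mem_insert_of_mem _ (he t ht.1 ht.2)
    exact (continuous_im.tendsto _).comp (c1.tendsto.comp c2)
  have T0 := (liml d h0).sub lim0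
  have T2 := (liml _ h2).sub lim2
  have T := tendsto_nhds_unique (T0.congr' (by
    filter_upwards [hev] with t ht
    have := congrArg Complex.im (hcst _ (h0 t ht.1 ht.2) _ (h2 t ht.1 ht.2))
    simpa using this)) T2
  linarith

lemma local_rays {u : ℂ → ℝ} {Ω : Set ℂ} {p : ℂ} (hΩo : IsOpen Ω) (hp : p ∈ Ω)
    (hu : HarmonicOnNhd u Ω) (hd : fderiv ℝ u p = 0) (hnc : ¬ ∀ᶠ z in 𝓝 p, u z = u p) :
    ∃ d : ℂ, d ≠ 0 ∧ ∃ n : ℕ, 2 ≤ n ∧ ∀ w : ℂ, ‖w‖ = 1 → ∀ t : ℝ, 0 < t → t ≤ 1 →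
      p + t * (d * w) ∈ Ω ∧ (w ^ n = 1 → u p < u (p + t * (d * w))) ∧
        (w ^ n = -1 → u (p + t * (d * w)) < u p) := by
  obtain ⟨R, hR, hball⟩ := Metric.isOpen_iff.1 hΩo p hp
  obtain ⟨F, hFa, hFu⟩ := (hu.mono hball).exists_analyticOnNhd_ball_re_eq
  have hpb : p ∈ ball p R := mem_ball_self hR
  have hFp := hFa p hpb
  have hup : (F p).re = u p := hFu hpb
  have hfan : AnalyticAt ℂ (fun z => F z - F p) p := hFp.sub analyticAt_const
  have hnz : ¬ ∀ᶠ z in 𝓝 p, F z - F p = 0 := by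
    intro h
    apply hnc
    filter_upwards [h, ball_mem_nhds p hR] with z hz hzb
    have : (F z).re = u z := hFu hzb
    rw [← this, ← hup, sub_eq_zero.1 hz]
  obtain ⟨n, g, hga, hgp, hfg⟩ := hfan.exists_eventuallyEq_pow_smul_nonzero_iff.2 hnz
  have hderiv : deriv F p = 0 := by
    have h1 : HasDerivAt F (deriv F p) p := hFp.differentiableAt.hasDerivAt
    have h2 := (reCLM.hasFDerivAt (x := F p)).comp p (h1.hasFDerivAt.restrictScalars ℝ)
    have h3 : u =ᶠ[𝓝 p] (reCLM ∘ F) := by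
      filter_upwards [ball_mem_nhds p hR] with z hz
      exact (hFu hz).symm
    have h4 := (h2.congr_of_eventuallyEq h3).fderiv
    rw [hd] at h4
    have a1 := congrArg (fun T => T 1) h4
    have a2 := congrArg (fun T => T I) h4
    simp at a1 a2
    apply Complex.ext
    · simpa using a1.symm
    · simpa using a2
  have hn : 2 ≤ n := by
    by_contra hn
    have : n = 0 ∨ n = 1 := by omega
    rcases this with rfl | rfl
    · have := hfg.self_of_nhds
      simp at this
      exact hgp this.symm
    · have h1 : HasDerivAt (fun z => F z - F p) (deriv F p) p :=
        hFp.differentiableAt.hasDerivAt.sub_const _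
      have h2 : HasDerivAt (fun z => (z - p) ^ 1 • g z) (g p) p := by
        have := ((hasDerivAt_id p).sub_const p).mul hga.differentiableAt.hasDerivAt
        simp only [id_eq, sub_self, one_mul, zero_mul, add_zero] at this
        exact this.congr_of_eventuallyEq (Eventually.of_forall fun z => by simp)
      have := (h1.congr_of_eventuallyEq (EventuallyEq.symm hfg)).unique h2
      rw [hderiv] at this
      exact hgp this.symm
  obtain ⟨e, he⟩ := IsAlgClosed.exists_pow_nat_eq (starRingEnd ℂ (g p)) (n := n) (by omega)
  have he0 : e ≠ 0 := by
    rintro rfl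
    rw [zero_pow (by omega)] at he
    exact hgp (by simpa using he.symm)
  have hpos : ∀ᶠ z in 𝓝 p, 0 < (e ^ n * g z).re := by
    have hc : ContinuousAt (fun z => (e ^ n * g z).re) p :=
      continuous_re.continuousAt.comp (continuousAt_const.mul hga.continuousAt)
    apply hc.eventually (lt_mem_nhds _)
    change 0 < (e ^ n * g p).re
    rw [he, mul_comm, mul_conj, ofReal_re]
    exact normSq_pos.2 hgp
  obtain ⟨r, hr, hrb⟩ := Metric.eventually_nhds_iff_ball.1 (hpos.and (hfg.and (ball_mem_nhds p hR)))
  have hne : 0 < ‖e‖ := norm_pos_iff.2 he0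
  set s : ℝ := r / (2 * ‖e‖) with hs
  have hs0 : 0 < s := by positivity
  have hse : s * ‖e‖ < r := by
    rw [hs]; field_simp; linarith
  refine ⟨s * e, mul_ne_zero (by exact_mod_cast hs0.ne') he0, n, hn, ?_⟩
  intro w hw t ht ht1
  set z := p + t * (s * e * w) with hz
  have hzb : z ∈ ball p r := by
    rw [mem_ball, dist_eq_norm, hz, add_sub_cancel_left, norm_mul, norm_mul, norm_mul, hw, mul_one,
      norm_real, norm_real, Real.norm_of_nonneg ht.le, Real.norm_of_nonneg hs0.le]
    nlinarith
  obtain ⟨q1, q2, q3⟩ := hrb z hzb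
  have q4 : (F z).re = u z := hFu q3
  have q5 : u z - u p = (((t * s) ^ n : ℝ) * (w ^ n * (e ^ n * g z))).re := by
    rw [← q4, ← hup, ← sub_re, q2, smul_eq_mul, hz, add_sub_cancel_left, ← hz]
    congr 1
    push_cast
    ring
  have hts : 0 < (t * s) ^ n := by positivity
  rw [re_ofReal_mul] at q5
  refine ⟨hball q3, ?_, ?_⟩
  · intro h
    rw [h, one_mul] at q5
    have := mul_pos hts q1
    linarith
  · intro h
    rw [h, neg_one_mul, neg_re] at q5
    have := mul_pos hts q1
    linarith

lemma harmonic_max {u : ℂ → ℝ} {V : Set ℂ} {c : ℝ} (hVo : IsOpen V) (hVb : Bornology.IsBounded V)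
    (hVc : IsPreconnected V) (huc : ContinuousOn u (closure V)) (hu : HarmonicOnNhd u V)
    (hf : ∀ z ∈ frontier V, u z ≤ c) : ∀ z ∈ V, u z ≤ c := by
  intro z hz
  obtain ⟨m, hm, hmax⟩ := hVb.isCompact_closure.exists_isMaxOn ⟨z, subset_closure hz⟩ huc
  refine (hmax (subset_closure hz)).trans ?_
  by_cases hmV : m ∈ V
  · obtain ⟨R, hR, hball⟩ := Metric.isOpen_iff.1 hVo m hmV
    obtain ⟨F, hFa, hFu⟩ := (hu.mono hball).exists_analyticOnNhd_ball_re_eq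
    have h1 : ∀ᶠ y in 𝓝 m, exp (F y) = exp (F m) := by
      apply eventually_eq_of_isLocalMax_norm (f := fun y => exp (F y))
      · filter_upwards [ball_mem_nhds m hR] with y hy
        exact (hFa y hy).differentiableAt.cexp
      · filter_upwards [ball_mem_nhds m hR] with y hy
        have e1 : (F y).re = u y := hFu hy
        have e2 : (F m).re = u m := hFu (mem_ball_self hR)
        simp only [Function.comp, norm_exp, Real.exp_le_exp, e1, e2]
        exact hmax (subset_closure (hball hy))
    have h2 : u =ᶠ[𝓝 m] (fun _ => u m) := by
      filter_upwards [h1, ball_mem_nhds m hR] with y hy hyb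
      have e1 : (F y).re = u y := hFu hyb
      have e2 : (F m).re = u m := hFu (mem_ball_self hR)
      have := congrArg norm hy
      rw [norm_exp, norm_exp, Real.exp_eq_exp, e1, e2] at this
      exact this
    have han : AnalyticOnNhd ℝ u V := fun y hy => HarmonicAt.analyticAt (hu y hy)
    have h3 := han.eqOn_of_preconnected_of_eventuallyEq analyticOnNhd_const hVc hmV h2
    have h4 : EqOn u (fun _ => u m) (closure V) :=
      h3.of_subset_closure huc continuousOn_const subset_closure subset_rfl
    have hne : (frontier V).Nonempty := by
      rw [nonempty_frontier_iff]
      refine ⟨⟨z, hz⟩, ?_⟩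
      rintro rfl
      exact NormedSpace.unbounded_univ ℝ ℂ hVb
    obtain ⟨q, hq⟩ := hne
    rw [← show u q = u m from h4 (frontier_subset_closure hq)]
    exact hf q hq
  · apply hf
    rw [hVo.frontier_eq]
    exact ⟨hm, hmV⟩

lemma superlevel_preconnected {u : ℂ → ℝ} {Ω : Set ℂ} {c : ℝ} (hΩo : IsOpen Ω)
    (hΩb : Bornology.IsBounded Ω) (huc : ContinuousOn u (closure Ω)) (hu : HarmonicOnNhd u Ω)
    (hA : IsPreconnected {z ∈ frontier Ω | c < u z}) :
    IsPreconnected {z ∈ closure Ω | c < u z} := by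
  have hOo : IsOpen (Ω ∩ u ⁻¹' Ioi c) :=
    (huc.mono subset_closure).isOpen_inter_preimage hΩo isOpen_Ioi
  have key : ∀ x ∈ {z ∈ closure Ω | c < u z}, {z ∈ frontier Ω | c < u z}.Nonempty ∧
      ∃ t ⊆ {z ∈ closure Ω | c < u z}, {z ∈ frontier Ω | c < u z} ⊆ t ∧ x ∈ t ∧
        IsPreconnected t := by
    intro x hx
    have hAs : {z ∈ frontier Ω | c < u z} ⊆ {z ∈ closure Ω | c < u z} :=
      fun z hz => ⟨frontier_subset_closure hz.1, hz.2⟩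
    by_cases hxΩ : x ∈ Ω
    swap
    · have hxA : x ∈ {z ∈ frontier Ω | c < u z} := by
        refine ⟨?_, hx.2⟩
        rw [hΩo.frontier_eq]
        exact ⟨hx.1, hxΩ⟩
      exact ⟨⟨x, hxA⟩, _, hAs, subset_rfl, hxA, hA⟩
    have hxO : x ∈ Ω ∩ u ⁻¹' Ioi c := ⟨hxΩ, hx.2⟩
    set V := connectedComponentIn (Ω ∩ u ⁻¹' Ioi c) x with hV
    have hVs : V ⊆ Ω ∩ u ⁻¹' Ioi c := connectedComponentIn_subset _ _
    have hVc : IsPreconnected V := isPreconnected_connectedComponentIn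
    have hVo : IsOpen V := hOo.connectedComponentIn
    have hxV : x ∈ V := mem_connectedComponentIn hxO
    have hVcl : closure V ⊆ closure Ω := closure_mono (hVs.trans inter_subset_left)
    have hmeet : ∃ q ∈ closure V, q ∈ {z ∈ frontier Ω | c < u z} := by
      by_contra hno
      push Not at hno
      have := harmonic_max (c := c) hVo (hΩb.subset (hVs.trans inter_subset_left)) hVc
        (huc.mono hVcl) (hu.mono (hVs.trans inter_subset_left)) (by
          intro q hq
          have hqc := frontier_subset_closure hq
          by_contra hlt
          push Not at hlt
          by_cases hqΩ : q ∈ Ω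
          · have hqO : q ∈ Ω ∩ u ⁻¹' Ioi c := ⟨hqΩ, hlt⟩
            have : insert q V ⊆ V := by
              apply (hVc.subset_closure (subset_insert _ _)
                (insert_subset hqc subset_closure)).subset_connectedComponentIn
                (mem_insert_of_mem _ hxV) (insert_subset hqO hVs)
            rw [hVo.frontier_eq] at hq
            exact hq.2 (this (mem_insert _ _))
          · apply hno q hqc
            refine ⟨?_, hlt⟩
            rw [hΩo.frontier_eq]
            exact ⟨hVcl hqc, hqΩ⟩) x hxV
      exact absurd hx.2 (not_lt.2 this)
    obtain ⟨q, hqV, hqA⟩ := hmeet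
    refine ⟨⟨q, hqA⟩, insert q V ∪ {z ∈ frontier Ω | c < u z}, ?_, subset_union_right,
      Or.inl (mem_insert_of_mem _ hxV), ?_⟩
    · refine union_subset (insert_subset (hAs hqA) ?_) hAs
      intro z hz
      exact ⟨subset_closure (hVs hz).1, (hVs hz).2⟩
    · exact (hVc.subset_closure (subset_insert _ _)
        (insert_subset hqV subset_closure)).union q (mem_insert _ _) hqA hA
  rcases Set.eq_empty_or_nonempty {z ∈ closure Ω | c < u z} with h | ⟨x, hx⟩
  · rw [h]; exact isPreconnected_empty
  obtain ⟨a, ha⟩ := (key x hx).1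
  refine isPreconnected_of_forall a fun y hy => ?_
  obtain ⟨-, t, ht, hAt, hyt, htc⟩ := key y hy
  exact ⟨t, ht, hAt ha, hyt, htc⟩

lemma cos_superlevel_ordConnected (c : ℝ) :
    ({θ ∈ Icc (-Real.pi) Real.pi | c < Real.cos θ}).OrdConnected := by
  refine ⟨fun x hx y hy z hz => ?_⟩
  obtain ⟨⟨hx1, hx2⟩, hx3⟩ := hx
  obtain ⟨⟨hy1, hy2⟩, hy3⟩ := hy
  obtain ⟨hz1, hz2⟩ := hz
  refine ⟨⟨by linarith, by linarith⟩, ?_⟩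
  rcases le_total 0 z with h | h
  · exact hy3.trans_le (Real.cos_le_cos_of_nonneg_of_le_pi h hy2 hz2)
  · refine hx3.trans_le ?_
    rw [← Real.cos_neg x, ← Real.cos_neg z]
    exact Real.cos_le_cos_of_nonneg_of_le_pi (by linarith) (by linarith) (by linarith)

lemma boundary_arc {γ : ℂ → ℂ} {Ω : Set ℂ} {u : ℂ → ℝ} {φ : ℝ} (c : ℝ)
    (hγ : ContinuousOn γ (sphere (0 : ℂ) 1)) (hΓ : frontier Ω = γ '' sphere (0 : ℂ) 1)
    (hub : ∀ θ : ℝ, u (γ (exp (θ * I))) = Real.cos (θ - φ)) :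
    IsPreconnected {z ∈ frontier Ω | c < u z} := by
  have : {z ∈ frontier Ω | c < u z} = (fun θ : ℝ => γ (exp ((θ + φ : ℝ) * I))) ''
      {θ ∈ Icc (-Real.pi) Real.pi | c < Real.cos θ} := by
    ext z
    constructor
    · rintro ⟨h1, h2⟩
      rw [hΓ] at h1
      obtain ⟨w, hw, rfl⟩ := h1
      have hw1 : ‖w‖ = 1 := by simpa using hw
      set θ := (w * exp (-(φ * I))).arg with hθ
      have e1 : w = exp ((θ + φ : ℝ) * I) := by
        have := norm_mul_exp_arg_mul_I (w * exp (-(φ * I)))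
        have e2 : ‖w * exp (-(φ * I))‖ = 1 := by
          rw [norm_mul, hw1, one_mul, norm_exp]; simp
        rw [e2, ofReal_one, one_mul, ← hθ] at this
        push_cast
        rw [add_mul, exp_add, this, mul_assoc, ← exp_add]; simp
      refine ⟨θ, ⟨⟨(neg_pi_lt_arg _).le, arg_le_pi _⟩, ?_⟩, ?_⟩
      · rw [e1, hub] at h2
        simpa using h2
      · simp only [← e1]
    · rintro ⟨θ, ⟨h1, h2⟩, rfl⟩
      refine ⟨?_, ?_⟩
      · rw [hΓ]
        exact ⟨_, by simp [norm_exp], rfl⟩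
      · simp only [hub]; simpa using h2
  rw [this]
  apply (cos_superlevel_ordConnected c).isPreconnected.image
  apply hγ.comp (by fun_prop)
  intro θ _
  simp [norm_exp]

lemma harmonicOnSet_harmonicOnNhd {f : ℂ → ℝ} {U : Set ℂ} (hU : IsOpen U)
    (hc : ContDiffOn ℝ 2 f U) (h : ∀ p ∈ U,
      fderiv ℝ (fun z => fderiv ℝ f z 1) p 1 +
        fderiv ℝ (fun z => fderiv ℝ f z Complex.I) p Complex.I = 0) : HarmonicOnNhd f U := by
  intro x hx
  refine ⟨hc.contDiffAt (hU.mem_nhds hx), ?_⟩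
  filter_upwards [hU.mem_nhds hx] with p hp
  have hcp : ContDiffAt ℝ 2 f p := hc.contDiffAt (hU.mem_nhds hp)
  have h1 : DifferentiableAt ℝ (fderiv ℝ f) p :=
    (hcp.fderiv_right (m := 1) (by norm_num)).differentiableAt one_ne_zero
  rw [laplacian_eq_iteratedFDeriv_complexPlane]
  simp only [iteratedFDeriv_two_apply, Pi.zero_apply]
  rw [← h p hp, fderiv_clm_apply h1 (by fun_prop), fderiv_clm_apply h1 (by fun_prop)]
  simp

lemma exists_direction (x y z w : ℝ) (h : x * w - z * y = 0) :
    ∃ φ : ℝ, Real.cos φ * x + Real.sin φ * z = 0 ∧ Real.cos φ * y + Real.sin φ * w = 0 := by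
  have key : ∃ a b : ℝ, (a ≠ 0 ∨ b ≠ 0) ∧ a * x + b * z = 0 ∧ a * y + b * w = 0 := by
    by_cases h1 : z = 0 ∧ x = 0
    · by_cases h2 : w = 0 ∧ y = 0
      · exact ⟨1, 0, Or.inl one_ne_zero, by simp [h1.2], by simp [h2.2]⟩
      · refine ⟨w, -y, ?_, by linarith, by ring⟩
        by_contra hh
        push Not at hh
        exact h2 ⟨hh.1, by linarith [hh.2]⟩
    · refine ⟨z, -x, ?_, by ring, by linarith⟩
      by_contra hh
      push Not at hh
      exact h1 ⟨hh.1, by linarith [hh.2]⟩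
  obtain ⟨a, b, hab, e1, e2⟩ := key
  set v : ℂ := ⟨a, b⟩ with hv
  have hv0 : v ≠ 0 := by
    intro h0
    have h1 := congrArg Complex.re h0
    have h2 := congrArg Complex.im h0
    simp [hv] at h1 h2
    rcases hab with h | h
    · exact h h1
    · exact h h2
  have hn : ‖v‖ ≠ 0 := norm_ne_zero_iff.2 hv0
  refine ⟨v.arg, ?_, ?_⟩
  · rw [Complex.cos_arg hv0, Complex.sin_arg]
    simp only [hv]
    rw [div_mul_eq_mul_div, div_mul_eq_mul_div, ← add_div, e1, zero_div]
  · rw [Complex.cos_arg hv0, Complex.sin_arg]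
    simp only [hv]
    rw [div_mul_eq_mul_div, div_mul_eq_mul_div, ← add_div, e2, zero_div]

lemma no_critical_point {Ω : Set ℂ} (hΩo : IsOpen Ω) (hΩb : Bornology.IsBounded Ω)
    (hΩc : IsPreconnected Ω) {γ : ℂ → ℂ} (hγ : ContinuousOn γ (sphere (0 : ℂ) 1))
    (hΓ : frontier Ω = γ '' sphere (0 : ℂ) 1) {u : ℂ → ℝ} {φ : ℝ}
    (huc : ContinuousOn u (closure Ω)) (hu : HarmonicOnNhd u Ω)
    (hub : ∀ θ : ℝ, u (γ (exp (θ * I))) = Real.cos (θ - φ)) {p : ℂ} (hp : p ∈ Ω)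
    (hd : fderiv ℝ u p = 0) : False := by
  have hfr : ∀ θ : ℝ, γ (exp (θ * I)) ∈ closure Ω := by
    intro θ
    apply frontier_subset_closure
    rw [hΓ]
    exact ⟨_, by simp [norm_exp], rfl⟩
  have hnc : ¬ ∀ᶠ z in 𝓝 p, u z = u p := by
    intro h
    have han : AnalyticOnNhd ℝ u Ω := fun y hy => HarmonicAt.analyticAt (hu y hy)
    have h3 := han.eqOn_of_preconnected_of_eventuallyEq analyticOnNhd_const hΩc hp h
    have h4 : EqOn u (fun _ => u p) (closure Ω) :=
      h3.of_subset_closure huc continuousOn_const subset_closure subset_rfl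
    have a1 := h4 (hfr φ)
    have a2 := h4 (hfr (φ + Real.pi))
    simp only [hub] at a1 a2
    rw [← a1] at a2
    simp at a2
    norm_num at a2
  obtain ⟨d, hd0, n, hn, hray⟩ := local_rays hΩo hp hu hd hnc
  have hXp : IsPreconnected {z ∈ closure Ω | u p < u z} :=
    superlevel_preconnected hΩo hΩb huc hu (boundary_arc _ hγ hΓ hub)
  have hXm : IsPreconnected {z ∈ closure Ω | u z < u p} := by
    have := superlevel_preconnected (u := -u) (c := -u p) hΩo hΩb huc.neg hu.neg
      (boundary_arc (φ := φ + Real.pi) _ hγ hΓ (by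
        intro θ
        rw [Pi.neg_apply, hub, ← sub_sub, Real.cos_sub_pi]))
    simpa using this
  have hn0 : (n : ℝ) ≠ 0 := by positivity
  have hn0c : (n : ℂ) ≠ 0 := by exact_mod_cast hn0
  have hn2 : (2 : ℝ) ≤ n := by exact_mod_cast hn
  have hπ := Real.pi_pos
  set α : ℝ := Real.pi / n with hα
  have hnα : (n : ℂ) * (α * I) = Real.pi * I := by
    rw [hα]; push_cast; field_simp
  have hw1 : exp (α * I) ^ n = -1 := by
    rw [← exp_nat_mul, hnα, exp_pi_mul_I]
  have hw3 : exp (-(α * I)) ^ n = -1 := by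
    rw [exp_neg, inv_pow, hw1]; norm_num
  have hnorm : ‖exp (α * I)‖ = 1 := norm_exp_ofReal_mul_I α
  have hnorm3 : ‖exp (-(α * I))‖ = 1 := by rw [exp_neg, norm_inv, hnorm, inv_one]
  refine crossing (p := p) (d := d) (α := α) hd0 (by positivity) ?_ hXp hXm ?_ ?_ ?_ ?_ ?_ ?_
  · rw [hα]
    exact div_le_div_of_nonneg_left hπ.le (by norm_num) hn2
  · intro B hB
    have h1 : ∀ᶠ z in 𝓝[closure Ω] B, u z < u p :=
      (huc B hB.1).eventually (gt_mem_nhds hB.2)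
    obtain ⟨ε, hε, h2⟩ := Metric.mem_nhdsWithin_iff.1 h1
    refine ⟨ε, hε, fun z hz => ?_⟩
    by_contra hlt
    push Not at hlt
    have hzc : z ∈ closure Ω ∧ u p ≤ u z := by
      rcases hz with rfl | hz
      · exact ⟨subset_closure hp, le_rfl⟩
      · exact ⟨hz.1, hz.2.le⟩
    have : u z < u p := h2 ⟨by rwa [mem_ball, dist_eq_norm], hzc.1⟩
    exact absurd this (not_lt.2 hzc.2)
  · intro h
    exact lt_irrefl _ h.2
  · intro t ht ht1
    have := hray 1 (by simp) t ht ht1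
    rw [mul_one] at this
    exact ⟨subset_closure this.1, this.2.1 (one_pow n)⟩
  · intro t ht ht1
    have := hray _ hnorm t ht ht1
    exact ⟨subset_closure this.1, this.2.2 hw1⟩
  · intro t ht ht1
    have := hray (exp (α * I) * exp (α * I)) (by rw [norm_mul, hnorm, one_mul]) t ht ht1
    rw [← mul_assoc d] at this
    exact ⟨subset_closure this.1, this.2.1 (by rw [mul_pow, hw1]; norm_num)⟩
  · intro t ht ht1
    have := hray _ hnorm3 t ht ht1
    exact ⟨subset_closure this.1, this.2.2 hw3⟩

end Helpers

theorem stmt_7 (Ω : Set ℂ) (hΩo : IsOpen Ω) (hΩb : Bornology.IsBounded Ω)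
    (hΩsc : SimplyConnectedSpace Ω)
    (γ : ℂ → ℂ) (hγinj : Set.InjOn γ (Metric.sphere (0 : ℂ) 1))
    (hγC2 : ContDiffOn ℝ 2 γ (Metric.sphere (0 : ℂ) 1))
    (hΓ : frontier Ω = γ '' Metric.sphere (0 : ℂ) 1)
    (ξ η : ℂ → ℝ)
    (hξc : ContinuousOn ξ (closure Ω)) (hηc : ContinuousOn η (closure Ω))
    (hξh : HarmonicOnSet ξ Ω) (hηh : HarmonicOnSet η Ω)
    (hξb : ∀ θ : ℝ, ξ (γ (Complex.exp (θ * Complex.I))) = Real.cos θ)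
    (hηb : ∀ θ : ℝ, η (γ (Complex.exp (θ * Complex.I))) = Real.sin θ)
    (g : ℂ → ℂ) (hg : ∀ z, g z = (ξ z : ℂ) + (η z : ℂ) * Complex.I) :
    ∀ p ∈ Ω,
      (fderiv ℝ ξ p 1 * fderiv ℝ η p Complex.I
          - fderiv ℝ η p 1 * fderiv ℝ ξ p Complex.I ≠ 0) ∧
      ∃ U : Set ℂ, p ∈ U ∧ U ⊆ Ω ∧ IsOpen U ∧ IsOpen (g '' U) ∧ Set.InjOn g U ∧
        ∃ ginv : ℂ → ℂ, ContDiffOn ℝ 1 ginv (g '' U) ∧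
          (∀ q ∈ U, ginv (g q) = q) ∧ (∀ w ∈ g '' U, g (ginv w) = w) := by
  have hΩc : IsPreconnected Ω := by
    rw [isPreconnected_iff_preconnectedSpace]
    infer_instance
  have hξn := harmonicOnSet_harmonicOnNhd hΩo hξh.1 hξh.2
  have hηn := harmonicOnSet_harmonicOnNhd hΩo hηh.1 hηh.2
  have hξd : ∀ p ∈ Ω, DifferentiableAt ℝ ξ p := fun p hp => (hξn p hp).1.differentiableAt two_ne_zero
  have hηd : ∀ p ∈ Ω, DifferentiableAt ℝ η p := fun p hp => (hηn p hp).1.differentiableAt two_ne_zero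
  have hdecomp : ∀ (T : ℂ →L[ℝ] ℝ) (a : ℂ), T a = a.re * T 1 + a.im * T I := by
    intro T a
    conv_lhs => rw [show a = a.re • (1 : ℂ) + a.im • (I : ℂ) by simp]
    rw [map_add, map_smul, map_smul, smul_eq_mul, smul_eq_mul]
  have hJ : ∀ p ∈ Ω, fderiv ℝ ξ p 1 * fderiv ℝ η p Complex.I
          - fderiv ℝ η p 1 * fderiv ℝ ξ p Complex.I ≠ 0 := by
    intro p hp h0
    obtain ⟨φ, e1, e2⟩ := exists_direction _ _ _ _ h0
    refine no_critical_point (u := Real.cos φ • ξ + Real.sin φ • η) (φ := φ) hΩo hΩb hΩc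
      hγC2.continuousOn hΓ ((hξc.const_smul _).add (hηc.const_smul _))
      (hξn.const_smul.add hηn.const_smul) ?_ hp ?_
    · intro θ
      simp only [Pi.add_apply, Pi.smul_apply, smul_eq_mul, hξb, hηb, Real.cos_sub]
      ring
    · rw [fderiv_add ((hξd p hp).const_smul _) ((hηd p hp).const_smul _),
        fderiv_const_smul (hξd p hp), fderiv_const_smul (hηd p hp)]
      ext a
      rw [hdecomp]
      have f1 : (Real.cos φ • fderiv ℝ ξ p + Real.sin φ • fderiv ℝ η p) 1 = 0 := by
        simpa using e1
      have f2 : (Real.cos φ • fderiv ℝ ξ p + Real.sin φ • fderiv ℝ η p) I = 0 := by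
        simpa using e2
      rw [f1, f2]; simp
  have hgeq : g = fun z => ofRealCLM (ξ z) + ofRealCLM (η z) * I := by
    funext z; simp [hg]
  have hgC : ∀ q ∈ Ω, ContDiffAt ℝ 2 g q := by
    intro q hq
    rw [hgeq]
    exact (ofRealCLM.contDiff.contDiffAt.comp q (hξn q hq).1).add
      ((ofRealCLM.contDiff.contDiffAt.comp q (hηn q hq).1).mul contDiffAt_const)
  have hgD : ∀ q ∈ Ω, ∃ e : ℂ ≃L[ℝ] ℂ, HasFDerivAt g (e : ℂ →L[ℝ] ℂ) q := by
    intro q hq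
    have h1 : HasFDerivAt g (ofRealCLM.comp (fderiv ℝ ξ q) +
        (ofRealCLM.comp (fderiv ℝ η q)).smulRight I) q := by
      have hh := (ofRealCLM.hasFDerivAt.comp q (hξd q hq).hasFDerivAt).add
        ((ofRealCLM.hasFDerivAt.comp q (hηd q hq).hasFDerivAt).mul_const I)
      rw [hgeq]
      refine hh.congr_fderiv ?_
      ext a
      simp [mul_comm]
    set D := ofRealCLM.comp (fderiv ℝ ξ q) + (ofRealCLM.comp (fderiv ℝ η q)).smulRight I with hD
    have hinj : Function.Injective (D : ℂ →ₗ[ℝ] ℂ) := by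
      rw [← LinearMap.ker_eq_bot, LinearMap.ker_eq_bot']
      intro a ha
      have ha' : ((fderiv ℝ ξ q a : ℝ) : ℂ) + ((fderiv ℝ η q a : ℝ) : ℂ) * I = 0 := by
        simpa [hD] using ha
      have r1 := congrArg Complex.re ha'
      have r2 := congrArg Complex.im ha'
      simp at r1 r2
      rw [hdecomp] at r1 r2
      have hj := hJ q hq
      apply Complex.ext
      · apply (mul_eq_zero.1 (?_ : _ * a.re = 0)).resolve_left hj
        linear_combination fderiv ℝ η q I * r1 - fderiv ℝ ξ q I * r2
      · apply (mul_eq_zero.1 (?_ : _ * a.im = 0)).resolve_left hj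
        linear_combination fderiv ℝ ξ q 1 * r2 - fderiv ℝ η q 1 * r1
    refine ⟨(LinearEquiv.ofInjectiveEndo (D : ℂ →ₗ[ℝ] ℂ) hinj).toContinuousLinearEquiv, ?_⟩
    refine h1.congr_fderiv ?_
    ext a <;> rfl
  intro p hp
  refine ⟨hJ p hp, ?_⟩
  obtain ⟨e, he⟩ := hgD p hp
  let E := (hgC p hp).toOpenPartialHomeomorph g he two_ne_zero
  have hE : (E : ℂ → ℂ) = g := rfl
  have hpE : p ∈ E.source := (hgC p hp).mem_toOpenPartialHomeomorph_source he two_ne_zero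
  have hUo : IsOpen (E.source ∩ Ω) := E.open_source.inter hΩo
  refine ⟨E.source ∩ Ω, ⟨hpE, hp⟩, inter_subset_right, hUo, ?_, ?_, E.symm, ?_, ?_, ?_⟩
  · exact E.isOpen_image_of_subset_source hUo inter_subset_left
  · exact E.injOn.mono inter_subset_left
  · rintro w ⟨q, hq, rfl⟩
    apply ContDiffAt.contDiffWithinAt
    obtain ⟨e', he'⟩ := hgD q hq.2
    have hs : E.symm (g q) = q := E.left_inv hq.1
    refine E.contDiffAt_symm (f₀' := e') (E.map_source hq.1) ?_ ?_
    · rw [hs]; exact he'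
    · rw [hs]; exact (hgC q hq.2).of_le (by norm_num)
  · intro q hq
    exact E.left_inv hq.1
  · rintro w ⟨q, hq, rfl⟩
    exact E.right_inv (E.map_source hq.1)
end
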